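/- Let A and B be finite dimensional algebras over a field k. If A and B are singularly equivalent of Morita type with level l, then |ext.dim(A) − ext.dim(B)| ≤ l. -/

import Mathlib

universe u w w₁ w₂ w₃ v v₁ v₂ v₃

open CategoryTheory Limits Pretriangulated

namespace ExtDim



variable (A : Type u) [Ring A]

/-- `X` belongs to `add M`: `X` is a direct summand of a finite direct sum of copies of `M`. -/
def MemAdd (M X : ModuleCat.{u} A) : Prop :=
  ∃ (n : ℕ) (Y : ModuleCat.{u} A), Nonempty ((↥X × ↥Y) ≃ₗ[A] (Fin n → ↥M))

/-- The operation `𝒞₁ • 𝒞₂` on classes of modules: (summands of) middle terms of short exact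
sequences with outer terms in `𝒞₁` and `𝒞₂`. -/
def Bullet (C₁ C₂ : Set (ModuleCat.{u} A)) : Set (ModuleCat.{u} A) :=
  {X | ∃ (X' M₁ M₂ : ModuleCat.{u} A), M₁ ∈ C₁ ∧ M₂ ∈ C₂ ∧
    ∃ (f : ↥M₁ →ₗ[A] (↥X × ↥X')) (g : (↥X × ↥X') →ₗ[A] ↥M₂),
      Function.Injective f ∧ Function.Surjective g ∧ LinearMap.range f = LinearMap.ker g}

/-- The class `[M]_n`. -/
def bracket (M : ModuleCat.{u} A) : ℕ → Set (ModuleCat.{u} A)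
  | 0 => {X | Subsingleton X}
  | n + 1 => Bullet A {X | MemAdd A M X} (bracket M n)

/-- The extension dimension of a subcategory `𝒜` of `A`-mod: the least `m` such that
`𝒜 ⊆ [M]_{m+1}` for some finitely generated module `M`. -/
noncomputable def extDimCat (𝒜 : Set (ModuleCat.{u} A)) : ℕ∞ :=
  sInf {m : ℕ∞ | ∃ n : ℕ, m = n ∧ ∃ M : ModuleCat.{u} A, Module.Finite A M ∧
    ∀ X ∈ 𝒜, X ∈ bracket A M (n + 1)}

/-- The subcategory of finitely generated modules, `A`-mod. -/
def fgModules : Set (ModuleCat.{u} A) := {X | Module.Finite A X}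

/-- The extension dimension of the Artin algebra `A`. -/
noncomputable def extDim : ℕ∞ := extDimCat A (fgModules A)

/-- A short exact sequence `0 → X → Y → Z → 0` of modules. -/
def SES {X Y Z : ModuleCat.{u} A} (f : ↥X →ₗ[A] ↥Y) (g : ↥Y →ₗ[A] ↥Z) : Prop :=
  Function.Injective f ∧ Function.Surjective g ∧ LinearMap.range f = LinearMap.ker g

/-- `Ω^n(A-mod)`: the subcategory of all `n`-th syzygy modules. -/
def syzygyCat : ℕ → Set (ModuleCat.{u} A)
  | 0 => fgModules A
  | n + 1 => {X | Module.Finite A X ∧ ∃ (P K : ModuleCat.{u} A),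
      Module.Finite A P ∧ Module.Projective A P ∧ K ∈ syzygyCat n ∧
      ∃ (f : ↥X →ₗ[A] ↥P) (g : ↥P →ₗ[A] ↥K), SES A f g}

/-- The `Ω`-extension dimension of `A`. -/
noncomputable def omegaExtDim : ℕ∞ := ⨅ i : ℕ, extDimCat A (syzygyCat A i)

/-- `Ω^∞(A-mod)`: modules admitting an exact sequence `0 → X → P₀ → P₁ → ⋯` with all `Pᵢ`
finitely generated projective. -/
def infSyzygyCat : Set (ModuleCat.{u} A) :=
  {X | Module.Finite A X ∧ ∃ (K P : ℕ → ModuleCat.{u} A), Nonempty (↥(K 0) ≃ₗ[A] ↥X) ∧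
    ∀ i, Module.Finite A (P i) ∧ Module.Projective A (P i) ∧
      ∃ (f : ↥(K i) →ₗ[A] ↥(P i)) (g : ↥(P i) →ₗ[A] ↥(K (i + 1))), SES A f g}

/-- `X` has projective dimension at most `n`. -/
def ProjDimLE : ModuleCat.{u} A → ℕ → Prop
  | X, 0 => Module.Projective A X
  | X, n + 1 => ∃ (K P : ModuleCat.{u} A), Module.Projective A P ∧
      (∃ (f : ↥K →ₗ[A] ↥P) (g : ↥P →ₗ[A] ↥X), SES A f g) ∧ ProjDimLE K n

/-- The projective dimension of a module, as an element of `ℕ∞`. -/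
noncomputable def pdim (X : ModuleCat.{u} A) : ℕ∞ :=
  sInf {m : ℕ∞ | ∃ n : ℕ, m = n ∧ ProjDimLE A X n}

/-- `A` has finite global dimension. -/
def HasFiniteGlobalDimension : Prop := ∃ n : ℕ, ∀ X : ModuleCat.{u} A, ProjDimLE A X n

section StableSyzygy

variable (R : Type u) [Ring R]

/-- `K` is (isomorphic to) the kernel of a surjection from a finitely generated projective
module onto `W`, i.e. a first syzygy of `W`. -/
def IsSyzygyStep (W K : ModuleCat.{u} R) : Prop :=
  ∃ P : ModuleCat.{u} R, Module.Finite R P ∧ Module.Projective R P ∧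
    ∃ (f : ↥K →ₗ[R] ↥P) (g : ↥P →ₗ[R] ↥W), SES R f g

/-- `K` is an `l`-th syzygy of `W` (computed from some resolution by finitely generated
projective modules). -/
def IsNthSyzygy : ℕ → ModuleCat.{u} R → ModuleCat.{u} R → Prop
  | 0, W, K => Nonempty (↥K ≃ₗ[R] ↥W)
  | n + 1, W, K => ∃ K₁ : ModuleCat.{u} R, IsSyzygyStep R W K₁ ∧ IsNthSyzygy n K₁ K

/-- `Z` and `W` are isomorphic in the stable category: they become isomorphic after adding
(finitely generated) projective direct summands to both sides. -/
def StablyIsomorphic (Z W : ModuleCat.{u} R) : Prop :=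
  ∃ P Q : ModuleCat.{u} R, Module.Finite R P ∧ Module.Projective R P ∧
    Module.Finite R Q ∧ Module.Projective R Q ∧
    Nonempty ((↥Z × ↥P) ≃ₗ[R] (↥W × ↥Q))

/-- `Z` is isomorphic, in the stable category, to the `l`-th syzygy `Ω^l(W)`. -/
def StablyIsoNthSyzygy (l : ℕ) (Z W : ModuleCat.{u} R) : Prop :=
  ∃ K : ModuleCat.{u} R, IsNthSyzygy R l W K ∧ StablyIsomorphic R Z K

end StableSyzygy

section TensorData

variable (R : Type u) [Ring R]

/-- `β` is a biadditive `R`-balanced map. -/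
def IsBalancedBiadd {X Y T : Type u} [AddCommGroup X] [AddCommGroup Y] [AddCommGroup T]
    [Module Rᵐᵒᵖ X] [Module R Y] (β : X → Y → T) : Prop :=
  (∀ x₁ x₂ y, β (x₁ + x₂) y = β x₁ y + β x₂ y) ∧
  (∀ x y₁ y₂, β x (y₁ + y₂) = β x y₁ + β x y₂) ∧
  (∀ (r : R) x y, β (MulOpposite.op r • x) y = β x (r • y))

/-- `β : X → Y → T` realizes `T` as the tensor product `X ⊗_R Y` of the right `R`-module `X`
and the left `R`-module `Y`: it is a universal biadditive `R`-balanced map. -/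
def IsTensorProductOver {X Y T : Type u} [AddCommGroup X] [AddCommGroup Y] [AddCommGroup T]
    [Module Rᵐᵒᵖ X] [Module R Y] (β : X → Y → T) : Prop :=
  IsBalancedBiadd R β ∧
  ∀ (T' : Type u) [AddCommGroup T'] (β' : X → Y → T'), IsBalancedBiadd R β' →
    ∃! φ : T →+ T', ∀ x y, φ (β x y) = β' x y

end TensorData

section Enveloping

open scoped TensorProduct

variable (k : Type u) [CommRing k] (A : Type u) [Ring A] [Algebra k A]

/-- A `k`-central `A`-`A`-bimodule, regarded as a module over the enveloping algebra
`A^e = A ⊗[k] Aᵐᵒᵖ`. -/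
noncomputable def envModuleCat (T : Type u) [AddCommGroup T] [Module k T] [Module A T]
    [Module Aᵐᵒᵖ T] [IsScalarTower k A T] [IsScalarTower k Aᵐᵒᵖ T] [SMulCommClass A Aᵐᵒᵖ T] :
    ModuleCat.{u} (A ⊗[k] Aᵐᵒᵖ) :=
  letI : Module (A ⊗[k] Aᵐᵒᵖ) T := TensorProduct.Algebra.module
  ModuleCat.of _ T

end Enveloping

section Statement

open scoped TensorProduct

variable (k : Type u) [Field k]
variable (A B : Type u) [Ring A] [Ring B] [Algebra k A] [Algebra k B]
variable [Module.Finite k A] [Module.Finite k B]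
variable (M : Type u) [AddCommGroup M] [Module k M] [Module A M] [Module Bᵐᵒᵖ M]
variable [IsScalarTower k A M] [IsScalarTower k Bᵐᵒᵖ M] [SMulCommClass A Bᵐᵒᵖ M]
variable (N : Type u) [AddCommGroup N] [Module k N] [Module B N] [Module Aᵐᵒᵖ N]
variable [IsScalarTower k B N] [IsScalarTower k Aᵐᵒᵖ N] [SMulCommClass B Aᵐᵒᵖ N]

/-- The pair of bimodules `(M, N)` defines a singular equivalence of Morita type with
level `l`: the four one-sided modules are finitely generated projective, and
`M ⊗_B N ≅ Ω^l_{A^e}(A)`, `N ⊗_A M ≅ Ω^l_{B^e}(B)` in the stable categories of bimodules.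
The tensor products are encoded via their universal property. -/
def SingularEquivalenceOfMoritaTypeWithLevel (l : ℕ) : Prop :=
  Module.Finite A M ∧ Module.Projective A M ∧
  Module.Finite Bᵐᵒᵖ M ∧ Module.Projective Bᵐᵒᵖ M ∧
  Module.Finite B N ∧ Module.Projective B N ∧
  Module.Finite Aᵐᵒᵖ N ∧ Module.Projective Aᵐᵒᵖ N ∧
  (∀ (T : Type u) [AddCommGroup T] [Module k T] [Module A T] [Module Aᵐᵒᵖ T]
      [IsScalarTower k A T] [IsScalarTower k Aᵐᵒᵖ T] [SMulCommClass A Aᵐᵒᵖ T]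
      (β : M → N → T), IsTensorProductOver B β →
      (∀ (a : A) (m : M) (n : N), β (a • m) n = a • β m n) →
      (∀ (a : Aᵐᵒᵖ) (m : M) (n : N), β m (a • n) = a • β m n) →
      (∀ (c : k) (m : M) (n : N), β (c • m) n = c • β m n) →
      StablyIsoNthSyzygy (A ⊗[k] Aᵐᵒᵖ) l (envModuleCat k A T) (envModuleCat k A A)) ∧
  (∀ (T : Type u) [AddCommGroup T] [Module k T] [Module B T] [Module Bᵐᵒᵖ T]
      [IsScalarTower k B T] [IsScalarTower k Bᵐᵒᵖ T] [SMulCommClass B Bᵐᵒᵖ T]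
      (β : N → M → T), IsTensorProductOver A β →
      (∀ (b : B) (n : N) (m : M), β (b • n) m = b • β n m) →
      (∀ (b : Bᵐᵒᵖ) (n : N) (m : M), β n (b • m) = b • β n m) →
      (∀ (c : k) (n : N) (m : M), β (c • n) m = c • β n m) →
      StablyIsoNthSyzygy (B ⊗[k] Bᵐᵒᵖ) l (envModuleCat k B T) (envModuleCat k B B))

end Statement

end ExtDim

namespace ExtDimAux

open ExtDim
open scoped TensorProduct

section Basic

variable {R : Type u} [Ring R]

theorem exists_compl {X Y : Type u} [AddCommGroup X] [AddCommGroup Y] [Module R X] [Module R Y]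
    (i : X →ₗ[R] Y) (r : Y →ₗ[R] X) (h : ∀ x, r (i x) = x) :
    ∃ Z : ModuleCat.{u} R, Nonempty ((X × ↥Z) ≃ₗ[R] Y) := by
  have hr : ∀ y, ((LinearMap.id - i ∘ₗ r : Y →ₗ[R] Y)) y ∈ LinearMap.ker r := fun y => by simp [h]
  refine ⟨ModuleCat.of R (LinearMap.ker r), ⟨LinearEquiv.ofLinearMap
    (i.coprod (LinearMap.ker r).subtype)
    (r.prod ((LinearMap.id - i ∘ₗ r).codRestrict (LinearMap.ker r) hr)) ?_ ?_⟩⟩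
  · ext y
    change i (r y) + (y - i (r y)) = y
    abel
  · apply LinearMap.ext
    rintro ⟨x, z, hz⟩
    have hz' : r z = 0 := hz
    refine Prod.ext ?_ (Subtype.ext ?_)
    · change r (i x + z) = x
      simp [hz', h]
    · change (i x + z) - i (r (i x + z)) = z
      simp [hz', h]

/-- Retract form of `MemAdd`. -/
theorem memAdd_iff (M X : ModuleCat.{u} R) :
    MemAdd R M X ↔ ∃ (n : ℕ) (i : Fin n → (↥X →ₗ[R] ↥M)) (r : Fin n → (↥M →ₗ[R] ↥X)),
      ∑ j, r j ∘ₗ i j = LinearMap.id := by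
  constructor
  · rintro ⟨n, Y, ⟨e⟩⟩
    refine ⟨n, fun j => LinearMap.proj j ∘ₗ e.toLinearMap ∘ₗ LinearMap.inl R X Y,
      fun j => LinearMap.fst R X Y ∘ₗ e.symm.toLinearMap ∘ₗ LinearMap.single R (fun _ => ↥M) j, ?_⟩
    ext x
    simp only [LinearMap.sum_apply, LinearMap.comp_apply]
    rw [← map_sum, ← map_sum]
    have : ∑ j, LinearMap.single R (fun _ => ↥M) j (LinearMap.proj (R := R) j
        (e (LinearMap.inl R X Y x))) = e (x, 0) := by
      funext j
      simp [Finset.sum_apply, Pi.single_apply]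
    erw [this]
    simp
  · rintro ⟨n, i, r, h⟩
    obtain ⟨Z, hZ⟩ := exists_compl (R := R) (X := X) (Y := Fin n → M) (LinearMap.pi i)
      (∑ j, r j ∘ₗ LinearMap.proj j) (fun x => by
        have := LinearMap.congr_fun h x
        simpa using this)
    exact ⟨n, Z, hZ⟩

/-- Retract form of `Bullet`. -/
theorem mem_bullet_iff (C₁ C₂ : Set (ModuleCat.{u} R)) (X : ModuleCat.{u} R) :
    X ∈ Bullet R C₁ C₂ ↔ ∃ (Y M₁ M₂ : ModuleCat.{u} R), M₁ ∈ C₁ ∧ M₂ ∈ C₂ ∧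
      (∃ (f : ↥M₁ →ₗ[R] ↥Y) (g : ↥Y →ₗ[R] ↥M₂), SES R f g) ∧
      ∃ (i : ↥X →ₗ[R] ↥Y) (r : ↥Y →ₗ[R] ↥X), ∀ x, r (i x) = x := by
  constructor
  · rintro ⟨X', M₁, M₂, h₁, h₂, f, g, hf, hg, hfg⟩
    exact ⟨ModuleCat.of R (X × X'), M₁, M₂, h₁, h₂, ⟨f, g, hf, hg, hfg⟩,
      LinearMap.inl R X X', LinearMap.fst R X X', fun x => rfl⟩
  · rintro ⟨Y, M₁, M₂, h₁, h₂, ⟨f, g, hf, hg, hfg⟩, i, r, h⟩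
    obtain ⟨Z, ⟨e⟩⟩ := exists_compl i r h
    refine ⟨Z, M₁, M₂, h₁, h₂, e.symm.toLinearMap ∘ₗ f, g ∘ₗ e.toLinearMap, ?_, ?_, ?_⟩
    · exact e.symm.injective.comp hf
    · exact hg.comp e.surjective
    · ext x
      constructor
      · rintro ⟨m, rfl⟩
        have : f m ∈ LinearMap.ker g := hfg ▸ ⟨m, rfl⟩
        simpa using this
      · intro hx
        have : e x ∈ LinearMap.range f := by rw [hfg]; exact hx
        obtain ⟨m, hm⟩ := this
        exact ⟨m, by simp [hm]⟩

theorem bracket_retract (M : ModuleCat.{u} R) {n : ℕ} {X Y : ModuleCat.{u} R}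
    (hY : Y ∈ bracket R M n) (i : ↥X →ₗ[R] ↥Y) (r : ↥Y →ₗ[R] ↥X) (h : ∀ x, r (i x) = x) :
    X ∈ bracket R M n := by
  cases n with
  | zero =>
    have : Subsingleton Y := hY
    exact (Function.LeftInverse.injective h).subsingleton
  | succ n =>
    obtain ⟨Z, M₁, M₂, h₁, h₂, hs, i', r', h'⟩ := (mem_bullet_iff _ _ _).1 hY
    exact (mem_bullet_iff _ _ _).2 ⟨Z, M₁, M₂, h₁, h₂, hs, i' ∘ₗ i, r ∘ₗ r', fun x => by simp [h, h']⟩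

theorem memAdd_prod_left {M M' X : ModuleCat.{u} R} (h : MemAdd R M X) :
    MemAdd R (ModuleCat.of R (M × M')) X := by
  obtain ⟨n, i, r, h⟩ := (memAdd_iff _ _).1 h
  refine (memAdd_iff _ _).2 ⟨n, fun j => LinearMap.inl R M M' ∘ₗ i j,
    fun j => r j ∘ₗ LinearMap.fst R M M', ?_⟩
  rw [← h]
  rfl

theorem memAdd_prod_right {M M' X : ModuleCat.{u} R} (h : MemAdd R M' X) :
    MemAdd R (ModuleCat.of R (M × M')) X := by
  obtain ⟨n, i, r, h⟩ := (memAdd_iff _ _).1 h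
  refine (memAdd_iff _ _).2 ⟨n, fun j => LinearMap.inr R M M' ∘ₗ i j,
    fun j => r j ∘ₗ LinearMap.snd R M M', ?_⟩
  rw [← h]
  rfl

theorem memAdd_prod {M X Y : ModuleCat.{u} R} (hX : MemAdd R M X) (hY : MemAdd R M Y) :
    MemAdd R M (ModuleCat.of R (X × Y)) := by
  obtain ⟨n, i, r, h⟩ := (memAdd_iff _ _).1 hX
  obtain ⟨n', i', r', h'⟩ := (memAdd_iff _ _).1 hY
  refine (memAdd_iff _ _).2 ⟨n + n',
    Fin.append (fun j => i j ∘ₗ LinearMap.fst R X Y) (fun j => i' j ∘ₗ LinearMap.snd R X Y),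
    Fin.append (fun j => LinearMap.inl R X Y ∘ₗ r j) (fun j => LinearMap.inr R X Y ∘ₗ r' j), ?_⟩
  rw [Fin.sum_univ_add]
  simp only [Fin.append_left, Fin.append_right]
  apply LinearMap.ext
  rintro ⟨x, y⟩
  have h1 := LinearMap.congr_fun h x
  have h2 := LinearMap.congr_fun h' y
  simp only [LinearMap.sum_apply, LinearMap.comp_apply, LinearMap.id_apply] at h1 h2
  simp only [LinearMap.add_apply, LinearMap.sum_apply, LinearMap.comp_apply]
  rw [← map_sum, ← map_sum]
  erw [h1, h2]
  simp

theorem bracket_prod_left {M M' : ModuleCat.{u} R} {n : ℕ} {X : ModuleCat.{u} R}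
    (h : X ∈ bracket R M n) : X ∈ bracket R (ModuleCat.of R (M × M')) n := by
  induction n generalizing X with
  | zero => exact h
  | succ n ih =>
    obtain ⟨X', M₁, M₂, h₁, h₂, hs⟩ := h
    exact ⟨X', M₁, M₂, memAdd_prod_left h₁, ih h₂, hs⟩

theorem memAdd_proj (P : ModuleCat.{u} R) [Module.Finite R P] [Module.Projective R P] :
    MemAdd R (ModuleCat.of R R) P := by
  obtain ⟨n, f, g, -, -, h⟩ := Module.Finite.exists_comp_eq_id_of_projective R P
  obtain ⟨Z, hZ⟩ := exists_compl (R := R) (X := P) (Y := Fin n → R) g f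
    (fun x => LinearMap.congr_fun h x)
  exact ⟨n, Z, hZ⟩

/-- Adding a projective summand. -/
theorem bracket_add_proj {U Y P Z : ModuleCat.{u} R} {n : ℕ} (hY : Y ∈ bracket R U (n + 1))
    [Module.Finite R P] [Module.Projective R P]
    (i : ↥Z →ₗ[R] (↥Y × ↥P)) (r : (↥Y × ↥P) →ₗ[R] ↥Z) (h : ∀ x, r (i x) = x) :
    Z ∈ bracket R (ModuleCat.of R (U × R)) (n + 1) := by
  obtain ⟨W, M₁, M₂, h₁, h₂, ⟨f, g, hf, hg, hfg⟩, i', r', h'⟩ := (mem_bullet_iff _ _ _).1 hY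
  refine (mem_bullet_iff _ _ _).2 ⟨ModuleCat.of R (W × P), ModuleCat.of R (M₁ × P), M₂,
    memAdd_prod (memAdd_prod_left (M' := ModuleCat.of R R) h₁) (memAdd_prod_right (M' := ModuleCat.of R R) (memAdd_proj P)),
    bracket_prod_left (M' := ModuleCat.of R R) h₂, ⟨f.prodMap LinearMap.id, g ∘ₗ LinearMap.fst R W P, ?_, ?_, ?_⟩,
    (i'.prodMap LinearMap.id) ∘ₗ i, r ∘ₗ (r'.prodMap LinearMap.id), ?_⟩
  · exact hf.prodMap Function.injective_id
  · exact hg.comp Prod.fst_surjective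
  · apply Submodule.ext
    rintro ⟨w, p⟩
    have : w ∈ LinearMap.range f ↔ w ∈ LinearMap.ker g := by rw [hfg]
    constructor
    · rintro ⟨⟨m, p'⟩, hm⟩
      have : w ∈ LinearMap.ker g := this.1 ⟨m, congrArg Prod.fst hm⟩
      exact this
    · intro hw
      obtain ⟨m, hm⟩ := this.2 hw
      exact ⟨(m, p), Prod.ext hm rfl⟩
  · intro x
    have : (r'.prodMap LinearMap.id) ((i'.prodMap LinearMap.id) (i x)) = i x :=
      Prod.ext (h' _) rfl
    change r ((r'.prodMap LinearMap.id) ((i'.prodMap LinearMap.id) (i x))) = x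
    rw [this, h]

end Basic

/-- An exact additive functor between module categories. -/
structure ExFun (R S : Type u) [Ring R] [Ring S] where
  obj : ModuleCat.{u} R → ModuleCat.{u} S
  map : ∀ {X Y : ModuleCat.{u} R}, (↥X →ₗ[R] ↥Y) → (↥(obj X) →ₗ[S] ↥(obj Y))
  map_id : ∀ X : ModuleCat.{u} R, map (LinearMap.id : ↥X →ₗ[R] ↥X) = LinearMap.id
  map_comp : ∀ {X Y Z : ModuleCat.{u} R} (g : ↥Y →ₗ[R] ↥Z) (f : ↥X →ₗ[R] ↥Y),
    map (X := X) (Y := Z) (g ∘ₗ f) = map g ∘ₗ map f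
  map_add : ∀ {X Y : ModuleCat.{u} R} (f g : ↥X →ₗ[R] ↥Y), map (f + g) = map f + map g
  map_exact : ∀ {X Y Z : ModuleCat.{u} R} (f : ↥X →ₗ[R] ↥Y) (g : ↥Y →ₗ[R] ↥Z),
    SES R f g → SES S (map f) (map g)

namespace ExFun

variable {R S : Type u} [Ring R] [Ring S] (F : ExFun R S)

theorem memAdd {M X : ModuleCat.{u} R} (h : MemAdd R M X) : MemAdd S (F.obj M) (F.obj X) := by
  obtain ⟨n, i, r, h⟩ := (memAdd_iff _ _).1 h
  refine (memAdd_iff _ _).2 ⟨n, fun j => F.map (i j), fun j => F.map (r j), ?_⟩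
  rw [← F.map_id, ← h]
  simp_rw [← F.map_comp]
  exact (_root_.map_sum (AddMonoidHom.mk' (F.map (X := X) (Y := X)) F.map_add)
    (fun j => r j ∘ₗ i j) Finset.univ).symm

theorem bracket {M X : ModuleCat.{u} R} {n : ℕ} (h : X ∈ ExtDim.bracket R M n) :
    F.obj X ∈ ExtDim.bracket S (F.obj M) n := by
  induction n generalizing X with
  | zero =>
    have hs : Subsingleton X := h
    have h0 : (LinearMap.id : ↥X →ₗ[R] ↥X) = 0 := LinearMap.ext fun x => Subsingleton.elim _ _
    have h1 : F.map (0 : ↥X →ₗ[R] ↥X) = 0 := by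
      have := F.map_add (0 : ↥X →ₗ[R] ↥X) 0
      simpa using this
    have h2 := F.map_id X
    rw [h0, h1] at h2
    exact ⟨fun a b => by
      rw [← LinearMap.id_apply (R := S) a, ← LinearMap.id_apply (R := S) b, ← h2]; rfl⟩
  | succ n ih =>
    obtain ⟨Y, M₁, M₂, h₁, h₂, ⟨f, g, hs⟩, i, r, hir⟩ := (mem_bullet_iff _ _ _).1 h
    refine (mem_bullet_iff _ _ _).2 ⟨F.obj Y, F.obj M₁, F.obj M₂, F.memAdd h₁, ih h₂,
      ⟨F.map f, F.map g, F.map_exact f g hs⟩, F.map i, F.map r, fun x => ?_⟩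
    have : r ∘ₗ i = LinearMap.id := LinearMap.ext hir
    have h3 := F.map_comp r i
    rw [this, F.map_id] at h3
    exact (LinearMap.congr_fun h3 x).symm

end ExFun

section Coind

variable (k : Type u) [Field k] {A : Type u} [Ring A] [Algebra k A]

attribute [local instance] ModuleCat.moduleOfAlgebraModule
attribute [local instance] ModuleCat.isScalarTower_of_algebra_moduleCat

/-- The coinduced module `Hom_k(A, X)`. -/
def Coind (X : ModuleCat.{u} A) : Type u := A →ₗ[k] ↥X

noncomputable instance (X : ModuleCat.{u} A) : AddCommGroup (Coind k X) :=
  inferInstanceAs (AddCommGroup (A →ₗ[k] ↥X))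

instance (X : ModuleCat.{u} A) : FunLike (Coind k X) A X :=
  inferInstanceAs (FunLike (A →ₗ[k] ↥X) A X)

theorem Coind.ext {X : ModuleCat.{u} A} {f g : Coind k X} (h : ∀ a, f a = g a) : f = g :=
  LinearMap.ext h

theorem Coind.add_apply {X : ModuleCat.{u} A} (f g : Coind k X) (a : A) :
    (f + g) a = f a + g a := rfl

theorem Coind.sub_apply {X : ModuleCat.{u} A} (f g : Coind k X) (a : A) :
    (f - g) a = f a - g a := rfl

theorem Coind.apply_add {X : ModuleCat.{u} A} (f : Coind k X) (a b : A) :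
    f (a + b) = f a + f b := LinearMap.map_add f a b

theorem Coind.apply_zero {X : ModuleCat.{u} A} (f : Coind k X) :
    f 0 = 0 := LinearMap.map_zero f

noncomputable instance (X : ModuleCat.{u} A) : Module A (Coind k X) where
  smul a f := (show A →ₗ[k] ↥X from f) ∘ₗ LinearMap.mulRight k a
  one_smul f := Coind.ext k fun b => congrArg f (mul_one b)
  mul_smul a b f := Coind.ext k fun c => congrArg f (mul_assoc c a b).symm
  smul_zero a := Coind.ext k fun c => rfl
  smul_add a f g := Coind.ext k fun c => rfl
  add_smul a b f := Coind.ext k fun c => by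
    refine (congrArg f (mul_add c a b)).trans (Coind.apply_add k f _ _)
  zero_smul f := Coind.ext k fun c => by
    refine (congrArg f (mul_zero c)).trans (Coind.apply_zero k f)

theorem Coind.smul_apply {X : ModuleCat.{u} A} (a : A) (f : Coind k X) (b : A) :
    (a • f) b = f (b * a) := rfl

/-- The unit `X → Hom_k(A, X)`. -/
noncomputable def Coind.unit (X : ModuleCat.{u} A) : ↥X →ₗ[A] Coind k X where
  toFun x := (LinearMap.toSpanSingleton A X x).restrictScalars k
  map_add' x y := Coind.ext k fun a => smul_add a x y
  map_smul' a x := Coind.ext k fun b => (mul_smul b a x).symm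

theorem Coind.unit_apply {X : ModuleCat.{u} A} (x : X) (a : A) :
    Coind.unit k X x a = a • x := rfl

/-- Functoriality. -/
noncomputable def Coind.map {X Y : ModuleCat.{u} A} (f : ↥X →ₗ[A] ↥Y) :
    Coind k X →ₗ[A] Coind k Y where
  toFun h := f.restrictScalars k ∘ₗ (show A →ₗ[k] ↥X from h)
  map_add' g h := Coind.ext k fun a => map_add f _ _
  map_smul' a h := Coind.ext k fun b => rfl

theorem Coind.map_apply {X Y : ModuleCat.{u} A} (f : ↥X →ₗ[A] ↥Y) (h : Coind k X) (a : A) :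
    Coind.map k f h a = f (h a) := rfl

theorem Coind.map_unit {X Y : ModuleCat.{u} A} (f : ↥X →ₗ[A] ↥Y) (x : X) :
    Coind.map k f (Coind.unit k X x) = Coind.unit k Y (f x) :=
  Coind.ext k fun a => map_smul f a x

/-- The functorial cosyzygy. -/
abbrev Cosyz (X : ModuleCat.{u} A) : Type u := Coind k X ⧸ LinearMap.range (Coind.unit k X)

noncomputable def Cosyz.map {X Y : ModuleCat.{u} A} (f : ↥X →ₗ[A] ↥Y) :
    Cosyz k X →ₗ[A] Cosyz k Y :=
  Submodule.mapQ _ _ (Coind.map k f) (by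
    rintro _ ⟨x, rfl⟩
    exact ⟨f x, (Coind.map_unit k f x).symm⟩)

theorem Cosyz.map_mk {X Y : ModuleCat.{u} A} (f : ↥X →ₗ[A] ↥Y) (h : Coind k X) :
    Cosyz.map k f (Submodule.Quotient.mk h) = Submodule.Quotient.mk (Coind.map k f h) := rfl

theorem Cosyz.exact {X Y Z : ModuleCat.{u} A} (f : ↥X →ₗ[A] ↥Y) (g : ↥Y →ₗ[A] ↥Z)
    (hs : SES A f g) : Function.Injective (Cosyz.map k f) ∧ Function.Surjective (Cosyz.map k g) ∧
      LinearMap.range (Cosyz.map k f) = LinearMap.ker (Cosyz.map k g) := by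
  obtain ⟨hf, hg, hfg⟩ := hs
  have hgf : ∀ x, g (f x) = 0 := fun x => by
    have : f x ∈ LinearMap.ker g := hfg ▸ ⟨x, rfl⟩
    exact this
  obtain ⟨s, hs⟩ := (g.restrictScalars k).exists_rightInverse_of_surjective
    (LinearMap.range_eq_top.2 hg)
  obtain ⟨t, ht⟩ := (f.restrictScalars k).exists_leftInverse_of_injective
    (LinearMap.ker_eq_bot.2 hf)
  have hs' : ∀ z, g (s z) = z := fun z => LinearMap.congr_fun hs z
  have ht' : ∀ x, t (f x) = x := fun x => LinearMap.congr_fun ht x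
  refine ⟨?_, ?_, ?_⟩
  · rw [injective_iff_map_eq_zero]
    intro q hq
    obtain ⟨h, rfl⟩ := Submodule.Quotient.mk_surjective _ q
    rw [Cosyz.map_mk, Submodule.Quotient.mk_eq_zero] at hq
    obtain ⟨y, hy⟩ := hq
    rw [Submodule.Quotient.mk_eq_zero]
    have hy' : ∀ a, a • y = f (h a) := fun a => congrArg (fun u : Coind k Y => u a) hy
    refine ⟨h 1, Coind.ext k fun a => hf ?_⟩
    rw [← hy', Coind.unit_apply, map_smul, ← hy', one_smul]
  · intro q
    obtain ⟨h, rfl⟩ := Submodule.Quotient.mk_surjective _ q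
    refine ⟨Submodule.Quotient.mk (show Coind k Y from s ∘ₗ (show A →ₗ[k] ↥Z from h)), ?_⟩
    rw [Cosyz.map_mk]
    congr 1
    exact Coind.ext k fun a => hs' _
  · apply le_antisymm
    · rintro _ ⟨q, rfl⟩
      obtain ⟨h, rfl⟩ := Submodule.Quotient.mk_surjective _ q
      rw [LinearMap.mem_ker, Cosyz.map_mk, Cosyz.map_mk]
      have : Coind.map k g (Coind.map k f h) = 0 := Coind.ext k fun a => hgf _
      rw [this]; rfl
    · intro q hq
      obtain ⟨h, rfl⟩ := Submodule.Quotient.mk_surjective _ q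
      rw [LinearMap.mem_ker, Cosyz.map_mk, Submodule.Quotient.mk_eq_zero] at hq
      obtain ⟨z, hz⟩ := hq
      obtain ⟨y, rfl⟩ := hg z
      have hz' : ∀ a, a • g y = g (h a) := fun a => congrArg (fun u : Coind k Z => u a) hz
      have key : ∀ a, f (t (h a - a • y)) = h a - a • y := fun a => by
        have : h a - a • y ∈ LinearMap.range f := by
          rw [hfg, LinearMap.mem_ker, map_sub, map_smul, hz', sub_self]
        obtain ⟨x, hx⟩ := this
        rw [← hx, ht']
      refine ⟨Submodule.Quotient.mk (show Coind k X from t ∘ₗ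
        (show A →ₗ[k] ↥Y from h - Coind.unit k Y y)), ?_⟩
      rw [Cosyz.map_mk, Submodule.Quotient.eq]
      refine ⟨-y, Coind.ext k fun a => ?_⟩
      have := key a
      change a • (-y) = f (t (h a - a • y)) - h a
      rw [this, smul_neg]; abel

/-- The cosyzygy functor. -/
noncomputable def cosyz : ExFun A A where
  obj X := ModuleCat.of A (Cosyz k X)
  map f := Cosyz.map k f
  map_id X := by
    apply LinearMap.ext
    intro q
    obtain ⟨h, rfl⟩ := Submodule.Quotient.mk_surjective _ q
    rfl
  map_comp g f := by
    apply LinearMap.ext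
    intro q
    obtain ⟨h, rfl⟩ := Submodule.Quotient.mk_surjective _ q
    rfl
  map_add f g := by
    apply LinearMap.ext
    intro q
    obtain ⟨h, rfl⟩ := Submodule.Quotient.mk_surjective _ q
    rfl
  map_exact f g h := Cosyz.exact k f g h

theorem cosyz_finite [Module.Finite k A] (X : ModuleCat.{u} A) [Module.Finite A X] :
    Module.Finite A ((cosyz k).obj X) := by
  have : Module.Finite k X := Module.Finite.trans A X
  have : Module.Finite k (A →ₗ[k] ↥X) := inferInstance
  have : Module.Finite A (Coind k X) := by
    obtain ⟨s, hs⟩ := (inferInstance : Module.Finite k (A →ₗ[k] ↥X))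
    let s' : Finset (Coind k X) := s
    refine ⟨⟨s', ?_⟩⟩
    have key : ∀ h : A →ₗ[k] ↥X, h ∈ Submodule.span k (s : Set (A →ₗ[k] ↥X)) →
        (show Coind k X from h) ∈ Submodule.span A (s' : Set (Coind k X)) := ?_
    · rw [eq_top_iff]
      rintro h -
      exact key h (by rw [hs]; trivial)
    intro h hh
    induction hh using Submodule.span_induction with
    | mem x hx => exact Submodule.subset_span hx
    | zero => exact Submodule.zero_mem _
    | add x y _ _ hx hy => exact Submodule.add_mem _ hx hy
    | smul c x _ hx =>
      have : (c • x : A →ₗ[k] ↥X) = (algebraMap k A c • (show Coind k X from x) : Coind k X) := by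
        refine Coind.ext k fun a => ?_
        rw [Coind.smul_apply]
        change c • x a = x (a * algebraMap k A c)
        rw [← Algebra.commutes, ← Algebra.smul_def, map_smul]
      rw [this]
      exact Submodule.smul_mem _ _ hx
  change Module.Finite A (Cosyz k X)
  infer_instance

/-- Dimension shifting. -/
theorem bracket_step {U X K P : ModuleCat.{u} A} {n : ℕ}
    (hK : K ∈ bracket A U n) [Module.Finite A P] [Module.Projective A P]
    (f : ↥K →ₗ[A] ↥P) (g : ↥P →ₗ[A] ↥X) (hs : SES A f g) :
    X ∈ bracket A (ModuleCat.of A ((cosyz k).obj U × A)) (n + 1) := by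
  obtain ⟨hf, hg, hfg⟩ := hs
  have hgf : ∀ x, g (f x) = 0 := fun x => by
    have : f x ∈ LinearMap.ker g := hfg ▸ ⟨x, rfl⟩
    exact this
  obtain ⟨t, ht⟩ := (f.restrictScalars k).exists_leftInverse_of_injective
    (LinearMap.ker_eq_bot.2 hf)
  have ht' : ∀ x, t (f x) = x := fun x => LinearMap.congr_fun ht x
  let φ : ↥P →ₗ[A] Coind k K :=
    { toFun := fun p => t ∘ₗ (LinearMap.toSpanSingleton A P p).restrictScalars k
      map_add' := fun p q => Coind.ext k fun a =>
        (congrArg t (smul_add a p q)).trans (map_add t _ _)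
      map_smul' := fun a p => Coind.ext k fun b => congrArg t (mul_smul b a p).symm }
  have hφ : ∀ p a, φ p a = t (a • p) := fun _ _ => rfl
  have hφf : ∀ x, φ (f x) = Coind.unit k K x := fun x => Coind.ext k fun a => by
    rw [hφ, ← map_smul, ht', Coind.unit_apply]
  -- the induced map on the quotient
  let s := Function.surjInv hg
  have hs : ∀ x, g (s x) = x := Function.surjInv_eq hg
  have key : ∀ p q : P, g p = g q →
      (Submodule.Quotient.mk (φ p) : Cosyz k K) = Submodule.Quotient.mk (φ q) := by
    intro p q h
    have : p - q ∈ LinearMap.range f := by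
      rw [hfg, LinearMap.mem_ker, map_sub, h, sub_self]
    obtain ⟨x, hx⟩ := this
    rw [Submodule.Quotient.eq]
    exact ⟨x, by rw [← hφf, hx, map_sub]⟩
  let ψ : ↥X →ₗ[A] Cosyz k K :=
    { toFun := fun x => Submodule.Quotient.mk (φ (s x))
      map_add' := fun x y => by
        rw [← Submodule.Quotient.mk_add, ← map_add]
        exact key _ _ (by simp [hs])
      map_smul' := fun a x => by
        rw [RingHom.id_apply, ← Submodule.Quotient.mk_smul, ← map_smul]
        exact key _ _ (by simp [hs]) }
  have hψ : ∀ p, ψ (g p) = Submodule.Quotient.mk (φ p) := fun p => key _ _ (hs _)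
  have hP : MemAdd A (ModuleCat.of A ((cosyz k).obj U × A)) P :=
    memAdd_prod_right (M' := ModuleCat.of A A) (memAdd_proj P)
  have hCo : (cosyz k).obj K ∈ bracket A (ModuleCat.of A ((cosyz k).obj U × A)) n :=
    bracket_prod_left (M' := ModuleCat.of A A) ((cosyz k).bracket hK)
  refine ⟨ModuleCat.of A (Coind k K), P, (cosyz k).obj K, hP, hCo, g.prod φ,
    (-ψ).coprod (Submodule.mkQ _), ?_, ?_, ?_⟩
  · rw [injective_iff_map_eq_zero]
    intro p hp
    have h1 : g p = 0 := congrArg Prod.fst hp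
    have h2 : φ p = 0 := congrArg Prod.snd hp
    have : p ∈ LinearMap.range f := by rw [hfg]; exact h1
    obtain ⟨x, rfl⟩ := this
    have h3 : t ((1 : A) • f x) = 0 := congrArg (fun u : Coind k K => u 1) h2
    rw [one_smul, ht'] at h3
    rw [h3, map_zero]
  · intro q
    obtain ⟨h, rfl⟩ := Submodule.Quotient.mk_surjective _ q
    refine ⟨(0, h), ?_⟩
    change -ψ 0 + Submodule.Quotient.mk h = Submodule.Quotient.mk h
    simp
  · apply le_antisymm
    · rintro _ ⟨p, rfl⟩
      change -ψ (g p) + Submodule.Quotient.mk (φ p) = 0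
      rw [hψ]; simp
    · rintro ⟨x, h⟩ hx
      obtain ⟨p, rfl⟩ := hg x
      have hx' : -ψ (g p) + Submodule.Quotient.mk h = 0 := hx
      rw [hψ, neg_add_eq_zero, eq_comm, Submodule.Quotient.eq] at hx'
      obtain ⟨y, hy⟩ := hx'
      refine ⟨p + f y, Prod.ext ?_ ?_⟩
      · change g (p + f y) = g p
        simp [hgf]
      · change φ (p + f y) = h
        rw [map_add, hφf, hy]; abel

theorem bracket_syzygy [Module.Finite k A] (n : ℕ) : ∀ (l : ℕ) (U : ModuleCat.{u} A),
    Module.Finite A U → ∃ V : ModuleCat.{u} A, Module.Finite A V ∧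
      ∀ X K : ModuleCat.{u} A, IsNthSyzygy A l X K → K ∈ bracket A U n →
        X ∈ bracket A V (n + l) := by
  intro l
  induction l with
  | zero =>
    intro U hU
    refine ⟨U, hU, ?_⟩
    rintro X K ⟨e⟩ hK
    exact bracket_retract U hK e.symm.toLinearMap e.toLinearMap (fun x => by simp)
  | succ l ih =>
    intro U hU
    obtain ⟨V, hV, h⟩ := ih U hU
    have := cosyz_finite k V
    refine ⟨ModuleCat.of A ((cosyz k).obj V × A), ?_, ?_⟩
    · change Module.Finite A ((cosyz k).obj V × A)
      infer_instance
    · rintro X K ⟨K₁, ⟨P, hP, hP', f, g, hs⟩, hK₁⟩ hK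
      exact bracket_step k (h K₁ K hK₁ hK) f g hs

end Coind

section Tensor

open MulOpposite

/-- The defining relations of the tensor product over a noncommutative ring. -/
def tensRel (R : Type u) [Ring R] (X Y : Type u) [AddCommGroup X] [AddCommGroup Y]
    [Module Rᵐᵒᵖ X] [Module R Y] : AddSubgroup (X ⊗[ℤ] Y) :=
  AddSubgroup.closure {t | ∃ (r : R) (x : X) (y : Y), t = (op r • x) ⊗ₜ[ℤ] y - x ⊗ₜ[ℤ] (r • y)}

/-- The tensor product over a noncommutative ring. -/
def Tens (R : Type u) [Ring R] (X Y : Type u) [AddCommGroup X] [AddCommGroup Y]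
    [Module Rᵐᵒᵖ X] [Module R Y] : Type u := (X ⊗[ℤ] Y) ⧸ tensRel R X Y

variable {R : Type u} [Ring R] {X X' X'' Y Y' Y'' : Type u} [AddCommGroup X] [AddCommGroup Y]
  [AddCommGroup X'] [AddCommGroup Y'] [AddCommGroup X''] [AddCommGroup Y'']
  [Module Rᵐᵒᵖ X] [Module R Y] [Module Rᵐᵒᵖ X'] [Module R Y'] [Module Rᵐᵒᵖ X''] [Module R Y'']

noncomputable instance : AddCommGroup (Tens R X Y) :=
  inferInstanceAs (AddCommGroup ((X ⊗[ℤ] Y) ⧸ tensRel R X Y))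

variable (R) in
/-- Pure tensors. -/
def tmk (x : X) (y : Y) : Tens R X Y := QuotientAddGroup.mk (x ⊗ₜ[ℤ] y)

theorem tmk_add_left (x x' : X) (y : Y) : tmk R (x + x') y = tmk R x y + tmk R x' y := by
  unfold tmk
  rw [TensorProduct.add_tmul]; rfl

theorem tmk_add_right (x : X) (y y' : Y) : tmk R x (y + y') = tmk R x y + tmk R x y' := by
  unfold tmk
  rw [TensorProduct.tmul_add]; rfl

theorem tmk_smul (r : R) (x : X) (y : Y) : tmk R (op r • x) y = tmk R x (r • y) := by
  refine QuotientAddGroup.eq_iff_sub_mem.2 ?_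
  exact AddSubgroup.subset_closure ⟨r, x, y, rfl⟩

theorem tmk_zero_left (y : Y) : tmk R (0 : X) y = 0 := by
  have := tmk_add_left (R := R) (0 : X) 0 y
  simpa using this

theorem tmk_zero_right (x : X) : tmk R x (0 : Y) = 0 := by
  have := tmk_add_right (R := R) x (0 : Y) 0
  simpa using this

theorem Tens.induction {p : Tens R X Y → Prop} (h : ∀ x y, p (tmk R x y)) (h0 : p 0)
    (ha : ∀ s t, p s → p t → p (s + t)) (t : Tens R X Y) : p t := by
  obtain ⟨t, rfl⟩ := QuotientAddGroup.mk_surjective t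
  induction t using TensorProduct.induction_on with
  | zero => exact h0
  | tmul x y => exact h x y
  | add s t hs ht => exact ha _ _ hs ht

theorem Tens.hom_ext {T : Type*} [AddCommGroup T] {f g : Tens R X Y →+ T}
    (h : ∀ x y, f (tmk R x y) = g (tmk R x y)) : f = g := by
  ext t
  induction t using Tens.induction with
  | h x y => exact h x y
  | h0 => simp
  | ha s t hs ht => simp [hs, ht]

/-- The universal property. -/
noncomputable def Tens.lift {T : Type*} [AddCommGroup T] (β : X → Y → T)
    (h1 : ∀ x x' y, β (x + x') y = β x y + β x' y)
    (h2 : ∀ x y y', β x (y + y') = β x y + β x y')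
    (h3 : ∀ (r : R) x y, β (op r • x) y = β x (r • y)) : Tens R X Y →+ T :=
  QuotientAddGroup.lift (tensRel R X Y)
    (TensorProduct.liftAddHom
      (AddMonoidHom.mk' (fun x => AddMonoidHom.mk' (β x) (h2 x))
        (fun x x' => AddMonoidHom.ext fun y => h1 x x' y))
      (fun n x y => by rw [map_zsmul, map_zsmul]; rfl))
    (by
      unfold tensRel
      rw [AddSubgroup.closure_le]
      rintro _ ⟨r, x, y, rfl⟩
      have : β (op r • x) y - β x (r • y) = 0 := by rw [h3, sub_self]
      simpa using this)

theorem Tens.lift_tmk {T : Type*} [AddCommGroup T] (β : X → Y → T) (h1 h2 h3) (x : X) (y : Y) :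
    Tens.lift (R := R) β h1 h2 h3 (tmk R x y) = β x y := by
  rfl

/-- Functoriality in both variables. -/
noncomputable def Tens.map (f : X →ₗ[Rᵐᵒᵖ] X') (g : Y →ₗ[R] Y') : Tens R X Y →+ Tens R X' Y' :=
  Tens.lift (fun x y => tmk R (f x) (g y))
    (fun x x' y => by rw [map_add, tmk_add_left])
    (fun x y y' => by rw [map_add, tmk_add_right])
    (fun r x y => by rw [map_smul, map_smul, tmk_smul])

theorem Tens.map_tmk (f : X →ₗ[Rᵐᵒᵖ] X') (g : Y →ₗ[R] Y') (x : X) (y : Y) :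
    Tens.map f g (tmk R x y) = tmk R (f x) (g y) := rfl

section LeftModule

variable {S : Type u} [Ring S] [Module S X] [SMulCommClass S Rᵐᵒᵖ X]
  [Module S X'] [SMulCommClass S Rᵐᵒᵖ X']

theorem lmul_aux_trivial : True := trivial

/-- Left multiplication as a right linear map. -/
def lmul (s : S) : X →ₗ[Rᵐᵒᵖ] X where
  toFun x := s • x
  map_add' := smul_add s
  map_smul' r x := smul_comm s r x

noncomputable instance : SMul S (Tens R X Y) := ⟨fun s t => Tens.map (lmul s) LinearMap.id t⟩

theorem smul_tmk (s : S) (x : X) (y : Y) : s • tmk R x y = tmk R (s • x) y := rfl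

theorem smul_add_aux (s : S) (t t' : Tens R X Y) : s • (t + t') = s • t + s • t' :=
  map_add (Tens.map (lmul s) LinearMap.id) t t'

theorem smul_zero_aux (s : S) : s • (0 : Tens R X Y) = 0 :=
  map_zero (Tens.map (lmul s) LinearMap.id)

noncomputable instance : Module S (Tens R X Y) where
  smul_add := smul_add_aux
  smul_zero := smul_zero_aux
  one_smul t := by
    induction t using Tens.induction with
    | h x y => rw [smul_tmk, one_smul]
    | h0 => exact smul_zero_aux _
    | ha s t hs ht => rw [smul_add_aux, hs, ht]
  mul_smul a b t := by
    induction t using Tens.induction with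
    | h x y => rw [smul_tmk, smul_tmk, smul_tmk, mul_smul]
    | h0 => simp only [smul_zero_aux]
    | ha s t hs ht => simp only [smul_add_aux, hs, ht]
  add_smul a b t := by
    induction t using Tens.induction with
    | h x y => rw [smul_tmk, smul_tmk, smul_tmk, add_smul, tmk_add_left]
    | h0 => simp only [smul_zero_aux, add_zero]
    | ha s t hs ht => simp only [smul_add_aux, hs, ht]; abel
  zero_smul t := by
    induction t using Tens.induction with
    | h x y => rw [smul_tmk, zero_smul, tmk_zero_left]
    | h0 => exact smul_zero_aux _
    | ha s t hs ht => rw [smul_add_aux, hs, ht, add_zero]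

/-- Promote an additive map out of a tensor product to a linear map. -/
noncomputable def Tens.toLin {T : Type*} [AddCommGroup T] [Module S T] (f : Tens R X Y →+ T)
    (h : ∀ (s : S) x y, f (tmk R (s • x) y) = s • f (tmk R x y)) : Tens R X Y →ₗ[S] T where
  toFun := f
  map_add' := map_add f
  map_smul' s t := by
    induction t using Tens.induction with
    | h x y => rw [smul_tmk, h]; rfl
    | h0 => simp
    | ha a b ha hb => simp_all [smul_add]

theorem Tens.toLin_apply {T : Type*} [AddCommGroup T] [Module S T] (f : Tens R X Y →+ T)
    (h : ∀ (s : S) x y, f (tmk R (s • x) y) = s • f (tmk R x y)) (t : Tens R X Y) :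
    Tens.toLin f h t = f t := rfl

theorem Tens.lin_ext {T : Type*} [AddCommGroup T] [Module S T] {f g : Tens R X Y →ₗ[S] T}
    (h : ∀ x y, f (tmk R x y) = g (tmk R x y)) : f = g := by
  ext t
  exact DFunLike.congr_fun (Tens.hom_ext (f := f.toAddMonoidHom) (g := g.toAddMonoidHom) h) t

/-- Finite generation of tensor products. -/
theorem Tens.finite [Module.Finite S X] [Module.Finite R Y] : Module.Finite S (Tens R X Y) := by
  classical
  obtain ⟨s, hs⟩ := (inferInstance : Module.Finite S X)
  obtain ⟨t, ht⟩ := (inferInstance : Module.Finite R Y)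
  refine ⟨⟨Finset.image₂ (tmk R) s t, ?_⟩⟩
  rw [eq_top_iff]
  rintro z -
  set Z := Submodule.span S ((Finset.image₂ (tmk R) s t : Finset (Tens R X Y)) :
    Set (Tens R X Y)) with hZ
  have h1 : ∀ y ∈ t, ∀ x : X, tmk R x y ∈ Z := by
    intro y hy x
    have hx : x ∈ Submodule.span S (s : Set X) := by rw [hs]; trivial
    induction hx using Submodule.span_induction with
    | mem x hx => exact Submodule.subset_span (Finset.mem_coe.2 (Finset.mem_image₂_of_mem hx hy))
    | zero => rw [tmk_zero_left]; exact Z.zero_mem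
    | add a b _ _ ha hb => rw [tmk_add_left]; exact Z.add_mem ha hb
    | smul c a _ ha => rw [← smul_tmk]; exact Z.smul_mem c ha
  have h2 : ∀ (y : Y) (x : X), tmk R x y ∈ Z := by
    intro y
    have hy : y ∈ Submodule.span R (t : Set Y) := by rw [ht]; trivial
    induction hy using Submodule.span_induction with
    | mem y hy => exact h1 y hy
    | zero => intro x; rw [tmk_zero_right]; exact Z.zero_mem
    | add a b _ _ ha hb => intro x; rw [tmk_add_right]; exact Z.add_mem (ha x) (hb x)
    | smul c a _ ha => intro x; rw [← tmk_smul]; exact ha _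
  induction z using Tens.induction with
  | h x y => exact h2 y x
  | h0 => exact Z.zero_mem
  | ha a b ha hb => exact Z.add_mem ha hb

end LeftModule

/-! Exactness of tensoring with a projective right module. -/

section Exact

variable (s : X →ₗ[Rᵐᵒᵖ] (X →₀ Rᵐᵒᵖ))

/-- The natural inclusion of `X ⊗ Y` into a direct sum of copies of `Y`. -/
noncomputable def Tens.incl : Tens R X Y →+ (X →₀ Y) :=
  Tens.lift (fun x y => (s x).sum fun x' b => Finsupp.single x' (unop b • y))
    (fun x x' y => by
      rw [map_add, Finsupp.sum_add_index']
      · intro a; simp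
      · intro a b c; simp [add_smul])
    (fun x y y' => by
      simp [smul_add, Finsupp.sum_add])
    (fun r x y => by
      rw [map_smul, Finsupp.sum_smul_index']
      · simp [mul_smul]
      · intro a; simp)

theorem Tens.incl_tmk (x : X) (y : Y) : Tens.incl (R := R) s (tmk R x y) =
    (s x).sum fun x' b => Finsupp.single x' (unop b • y) := rfl

/-- The natural projection. -/
noncomputable def Tens.projn : (X →₀ Y) →+ Tens R X Y :=
  Finsupp.liftAddHom fun x => AddMonoidHom.mk' (tmk R x) (tmk_add_right x)

theorem Tens.projn_single (x : X) (y : Y) :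
    Tens.projn (R := R) (Finsupp.single x y) = tmk R x y :=
  Finsupp.liftAddHom_apply_single _ _ _

theorem Tens.projn_incl (hs : Function.LeftInverse (Finsupp.linearCombination Rᵐᵒᵖ id) s)
    (t : Tens R X Y) : Tens.projn (Tens.incl s t) = t := by
  induction t using Tens.induction with
  | h x y =>
    rw [Tens.incl_tmk, map_finsuppSum]
    simp_rw [Tens.projn_single]
    conv_rhs => rw [← hs x, Finsupp.linearCombination_apply]
    have : ∀ c : X →₀ Rᵐᵒᵖ, (c.sum fun x' b => tmk R x' (unop b • y)) =
        tmk R (c.sum fun i a => a • id i) y := by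
      intro c
      induction c using Finsupp.induction_linear with
      | zero => simp [tmk_zero_left]
      | add f g hf hg =>
        rw [Finsupp.sum_add_index', Finsupp.sum_add_index', hf, hg, tmk_add_left]
        · simp
        · intros; rw [add_smul]
        · simp [tmk_zero_right]
        · intros; rw [MulOpposite.unop_add, add_smul, tmk_add_right]
      | single a b =>
        rw [Finsupp.sum_single_index, Finsupp.sum_single_index, ← tmk_smul]
        · rfl
        · simp
        · simp [tmk_zero_right]
    exact this _
  | h0 => simp
  | ha a b ha hb => rw [map_add, map_add, ha, hb]

theorem Tens.incl_map (g : Y →ₗ[R] Y') (t : Tens R X Y) :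
    Tens.incl s (Tens.map LinearMap.id g t) = Finsupp.mapRange.addMonoidHom g.toAddMonoidHom
      (Tens.incl s t) := by
  induction t using Tens.induction with
  | h x y =>
    rw [Tens.map_tmk, Tens.incl_tmk, Tens.incl_tmk, map_finsuppSum]
    simp
  | h0 => simp
  | ha a b ha hb => rw [map_add, map_add, ha, hb, map_add, map_add]

theorem Tens.projn_map (g : Y →ₗ[R] Y') (t : X →₀ Y) :
    Tens.projn (R := R) (Finsupp.mapRange.addMonoidHom g.toAddMonoidHom t) =
      Tens.map LinearMap.id g (Tens.projn t) := by
  induction t using Finsupp.induction_linear with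
  | zero => simp
  | add a b ha hb => rw [map_add, map_add, ha, hb, map_add, map_add]
  | single x y => simp [Tens.projn_single, Tens.map_tmk]

end Exact

theorem Tens.map_exact_right [Module.Projective Rᵐᵒᵖ X] (f : Y →ₗ[R] Y') (g : Y' →ₗ[R] Y'')
    (hf : Function.Injective f) (hg : Function.Surjective g)
    (hfg : LinearMap.range f = LinearMap.ker g) :
    Function.Injective (Tens.map (LinearMap.id : X →ₗ[Rᵐᵒᵖ] X) f) ∧
    Function.Surjective (Tens.map (LinearMap.id : X →ₗ[Rᵐᵒᵖ] X) g) ∧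
    (∀ t, Tens.map (LinearMap.id : X →ₗ[Rᵐᵒᵖ] X) g t = 0 ↔
      ∃ t', Tens.map (LinearMap.id : X →ₗ[Rᵐᵒᵖ] X) f t' = t) := by
  obtain ⟨s, hs⟩ := (inferInstance : Module.Projective Rᵐᵒᵖ X)
  have hgf : ∀ x, g (f x) = 0 := fun x => by
    have : f x ∈ LinearMap.ker g := hfg ▸ ⟨x, rfl⟩
    exact this
  refine ⟨?_, ?_, ?_⟩
  · intro t t' h
    have h1 := congrArg (Tens.incl s) h
    rw [Tens.incl_map, Tens.incl_map] at h1
    have h2 := Finsupp.mapRange_injective f (map_zero f) hf h1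
    rw [← Tens.projn_incl s hs t, ← Tens.projn_incl s hs t', h2]
  · intro t
    induction t using Tens.induction with
    | h x y =>
      obtain ⟨y, rfl⟩ := hg y
      exact ⟨tmk R x y, rfl⟩
    | h0 => exact ⟨0, map_zero _⟩
    | ha a b ha hb =>
      obtain ⟨a, rfl⟩ := ha
      obtain ⟨b, rfl⟩ := hb
      exact ⟨a + b, map_add _ _ _⟩
  · intro t
    constructor
    · intro h
      have h1 := congrArg (Tens.incl s) h
      rw [Tens.incl_map, map_zero] at h1
      have h2 : ∀ x, ∃ y, f y = Tens.incl s t x := fun x => by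
        have : Tens.incl s t x ∈ LinearMap.ker g := DFunLike.congr_fun h1 x
        rw [← hfg] at this
        exact this
      obtain ⟨u, hu⟩ : ∃ u : X →₀ Y, Finsupp.mapRange.addMonoidHom f.toAddMonoidHom u =
          Tens.incl s t := by
        choose v hv using h2
        refine ⟨Finsupp.onFinset (Tens.incl s t).support v ?_, Finsupp.ext fun x => hv x⟩
        intro x hx
        rw [Finsupp.mem_support_iff]
        intro h0
        apply hx
        apply hf
        rw [hv, h0, map_zero]
      refine ⟨Tens.projn u, ?_⟩
      rw [← Tens.projn_map, hu, Tens.projn_incl s hs]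
    · rintro ⟨t', rfl⟩
      induction t' using Tens.induction with
      | h x y => rw [Tens.map_tmk, Tens.map_tmk, hgf, tmk_zero_right]
      | h0 => simp
      | ha a b ha hb => rw [map_add, map_add, ha, hb, add_zero]

/-- Tensoring with a bimodule that is projective on the right. -/
noncomputable def tensFun (A B : Type u) [Ring A] [Ring B] (M : Type u) [AddCommGroup M]
    [Module A M] [Module Bᵐᵒᵖ M] [SMulCommClass A Bᵐᵒᵖ M] [Module.Projective Bᵐᵒᵖ M] :
    ExFun B A where
  obj X := ModuleCat.of A (Tens B M X)
  map f := Tens.toLin (Tens.map LinearMap.id f) (fun s x y => rfl)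
  map_id X := Tens.lin_ext fun x y => rfl
  map_comp g f := Tens.lin_ext fun x y => rfl
  map_add f g := Tens.lin_ext fun x y => tmk_add_right _ _ _
  map_exact f g h := by
    obtain ⟨h1, h2, h3⟩ := Tens.map_exact_right (X := M) f g h.1 h.2.1 h.2.2
    refine ⟨h1, h2, ?_⟩
    ext t
    exact (h3 t).symm

end Tensor

section TensorMore

open MulOpposite

variable {R : Type u} [Ring R] {X X' X'' Y Y' Y'' : Type u} [AddCommGroup X] [AddCommGroup Y]
  [AddCommGroup X'] [AddCommGroup Y'] [AddCommGroup X''] [AddCommGroup Y'']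
  [Module Rᵐᵒᵖ X] [Module R Y] [Module Rᵐᵒᵖ X'] [Module R Y'] [Module Rᵐᵒᵖ X''] [Module R Y'']

theorem Tens.map_map (f' : X' →ₗ[Rᵐᵒᵖ] X'') (g' : Y' →ₗ[R] Y'') (f : X →ₗ[Rᵐᵒᵖ] X')
    (g : Y →ₗ[R] Y') (t : Tens R X Y) :
    Tens.map f' g' (Tens.map f g t) = Tens.map (f' ∘ₗ f) (g' ∘ₗ g) t := by
  induction t using Tens.induction with
  | h x y => rfl
  | h0 => simp
  | ha a b ha hb => simp only [map_add, ha, hb]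

theorem Tens.map_add_left (f f' : X →ₗ[Rᵐᵒᵖ] X') (g : Y →ₗ[R] Y') (t : Tens R X Y) :
    Tens.map (f + f') g t = Tens.map f g t + Tens.map f' g t := by
  induction t using Tens.induction with
  | h x y => rw [Tens.map_tmk, LinearMap.add_apply, tmk_add_left]; rfl
  | h0 => simp
  | ha a b ha hb => simp only [map_add, ha, hb]; abel

theorem Tens.map_id_id (t : Tens R X Y) :
    Tens.map (LinearMap.id : X →ₗ[Rᵐᵒᵖ] X) (LinearMap.id : Y →ₗ[R] Y) t = t := by
  induction t using Tens.induction with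
  | h x y => rfl
  | h0 => simp
  | ha a b ha hb => simp only [map_add, ha, hb]

/-- Right split exact sequences stay exact. -/
theorem Tens.map_exact_left (f : X →ₗ[Rᵐᵒᵖ] X') (g : X' →ₗ[Rᵐᵒᵖ] X'') (ρ : X' →ₗ[Rᵐᵒᵖ] X)
    (t : X'' →ₗ[Rᵐᵒᵖ] X') (h1 : ρ ∘ₗ f = LinearMap.id) (h2 : g ∘ₗ t = LinearMap.id)
    (h3 : f ∘ₗ ρ + t ∘ₗ g = LinearMap.id) (h4 : ∀ x, g (f x) = 0) :
    Function.Injective (Tens.map f (LinearMap.id : Y →ₗ[R] Y)) ∧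
    Function.Surjective (Tens.map g (LinearMap.id : Y →ₗ[R] Y)) ∧
    (∀ z, Tens.map g (LinearMap.id : Y →ₗ[R] Y) z = 0 ↔
      ∃ z', Tens.map f (LinearMap.id : Y →ₗ[R] Y) z' = z) := by
  refine ⟨?_, ?_, ?_⟩
  · refine Function.LeftInverse.injective (g := Tens.map ρ LinearMap.id) fun z => ?_
    rw [Tens.map_map, h1]; exact Tens.map_id_id z
  · refine Function.RightInverse.surjective (g := Tens.map t LinearMap.id) fun z => ?_
    rw [Tens.map_map, h2]; exact Tens.map_id_id z
  · intro z
    constructor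
    · intro hz
      refine ⟨Tens.map ρ LinearMap.id z, ?_⟩
      have h5 := Tens.map_id_id z
      rw [← h3, Tens.map_add_left] at h5
      have h6 : Tens.map (t ∘ₗ g) (LinearMap.id : Y →ₗ[R] Y) z = 0 := by
        have := Tens.map_map t (LinearMap.id : Y →ₗ[R] Y) g (LinearMap.id : Y →ₗ[R] Y) z
        rw [hz, map_zero] at this
        exact this.symm
      rw [h6, add_zero] at h5
      rw [Tens.map_map]
      exact h5
    · rintro ⟨z', rfl⟩
      rw [Tens.map_map]
      have : g ∘ₗ f = 0 := LinearMap.ext h4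
      rw [this]
      induction z' using Tens.induction with
      | h x y => rw [Tens.map_tmk, LinearMap.zero_apply, tmk_zero_left]
      | h0 => simp
      | ha a b ha hb => rw [map_add, ha, hb, add_zero]

end TensorMore

section Env

open MulOpposite

variable {k : Type u} [Field k] {A : Type u} [Ring A] [Algebra k A]

/-- A module over the enveloping algebra viewed as a bimodule. -/
def Bi (W : ModuleCat.{u} (A ⊗[k] Aᵐᵒᵖ)) : Type u := W

variable (W : ModuleCat.{u} (A ⊗[k] Aᵐᵒᵖ))

noncomputable instance : AddCommGroup (Bi W) := inferInstanceAs (AddCommGroup W)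
noncomputable instance : Module (A ⊗[k] Aᵐᵒᵖ) (Bi W) :=
  inferInstanceAs (Module (A ⊗[k] Aᵐᵒᵖ) W)
noncomputable instance : Module A (Bi W) :=
  Module.compHom W (Algebra.TensorProduct.includeLeftRingHom : A →+* A ⊗[k] Aᵐᵒᵖ)
noncomputable instance : Module Aᵐᵒᵖ (Bi W) :=
  Module.compHom W (Algebra.TensorProduct.includeRight : Aᵐᵒᵖ →ₐ[k] A ⊗[k] Aᵐᵒᵖ).toRingHom

variable {W}

theorem bi_smul (a : A) (w : Bi W) : a • w = (a ⊗ₜ[k] (1 : Aᵐᵒᵖ)) • w := rfl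
theorem bi_op_smul (b : Aᵐᵒᵖ) (w : Bi W) : b • w = ((1 : A) ⊗ₜ[k] b) • w := rfl

theorem bi_smul_smul (a : A) (b : Aᵐᵒᵖ) (w : Bi W) : a • b • w = (a ⊗ₜ[k] b) • w := by
  rw [bi_smul, bi_op_smul, ← mul_smul, Algebra.TensorProduct.tmul_mul_tmul, mul_one, one_mul]

theorem bi_smul_smul' (a : A) (b : Aᵐᵒᵖ) (w : Bi W) : b • a • w = (a ⊗ₜ[k] b) • w := by
  rw [bi_smul, bi_op_smul, ← mul_smul, Algebra.TensorProduct.tmul_mul_tmul, mul_one, one_mul]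

noncomputable instance : SMulCommClass A Aᵐᵒᵖ (Bi W) where
  smul_comm a b w := by rw [bi_smul_smul, bi_smul_smul']

variable {V : ModuleCat.{u} (A ⊗[k] Aᵐᵒᵖ)}

/-- Underlying right linear map. -/
def biMap (f : ↥W →ₗ[A ⊗[k] Aᵐᵒᵖ] ↥V) : Bi W →ₗ[Aᵐᵒᵖ] Bi V where
  toFun := f
  map_add' := map_add f
  map_smul' b w := map_smul f ((1 : A) ⊗ₜ[k] b) w

variable (X : ModuleCat.{u} A)

/-- `W ⊗_A X`. -/
noncomputable def tX (W : ModuleCat.{u} (A ⊗[k] Aᵐᵒᵖ)) : ModuleCat.{u} A :=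
  ModuleCat.of A (Tens A (Bi W) X)

/-- Functoriality of `W ⊗_A X`. -/
noncomputable def tXmap (f : ↥W →ₗ[A ⊗[k] Aᵐᵒᵖ] ↥V) : ↥(tX X W) →ₗ[A] ↥(tX X V) :=
  Tens.toLin (X := Bi W) (Tens.map (biMap f) LinearMap.id) (fun a w x =>
    congrArg (fun v : Bi V => tmk A v x) (map_smul f (a ⊗ₜ[k] (1 : Aᵐᵒᵖ)) w))

/-- The regular bimodule is projective on the right. -/
theorem bi_regular_projective :
    Module.Projective Aᵐᵒᵖ (Bi (ModuleCat.of (A ⊗[k] Aᵐᵒᵖ) (A ⊗[k] Aᵐᵒᵖ))) := by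
  have h : Module.Projective Aᵐᵒᵖ (Aᵐᵒᵖ ⊗[k] A) := inferInstance
  let e : (Aᵐᵒᵖ ⊗[k] A) ≃ₗ[Aᵐᵒᵖ] (Bi (ModuleCat.of (A ⊗[k] Aᵐᵒᵖ) (A ⊗[k] Aᵐᵒᵖ))) :=
    { (TensorProduct.comm k Aᵐᵒᵖ A).toAddEquiv with
      map_smul' := fun b t => by
        change TensorProduct.comm k Aᵐᵒᵖ A (b • t) =
          ((1 : A) ⊗ₜ[k] b) * TensorProduct.comm k Aᵐᵒᵖ A t
        induction t using TensorProduct.induction_on with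
        | zero => simp
        | tmul x y => simp [TensorProduct.smul_tmul']
        | add x y hx hy => rw [smul_add, map_add, hx, hy, map_add, mul_add] }
  exact Module.Projective.of_equiv' e

theorem bi_projective [hW : Module.Projective (A ⊗[k] Aᵐᵒᵖ) W] :
    Module.Projective Aᵐᵒᵖ (Bi W) := by
  obtain ⟨s, hs⟩ := hW
  have h0 := bi_regular_projective (k := k) (A := A)
  set E := Bi (ModuleCat.of (A ⊗[k] Aᵐᵒᵖ) (A ⊗[k] Aᵐᵒᵖ)) with hE
  have h1 : Module.Projective Aᵐᵒᵖ (↥W →₀ E) := by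
    classical
    exact Module.Projective.of_equiv' (finsuppLequivDFinsupp (ι := ↥W) (M := E) Aᵐᵒᵖ).symm
  let i : Bi W →ₗ[Aᵐᵒᵖ] (↥W →₀ E) :=
    { toFun := fun w => (show ↥W →₀ E from s w)
      map_add' := fun w w' => map_add s w w'
      map_smul' := fun b w => map_smul s ((1 : A) ⊗ₜ[k] b) w }
  let r : (↥W →₀ E) →ₗ[Aᵐᵒᵖ] Bi W :=
    { toFun := fun w => Finsupp.linearCombination (A ⊗[k] Aᵐᵒᵖ) id
        (show ↥W →₀ (A ⊗[k] Aᵐᵒᵖ) from w)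
      map_add' := fun w w' => map_add (Finsupp.linearCombination (A ⊗[k] Aᵐᵒᵖ) id) _ _
      map_smul' := fun b w => map_smul (Finsupp.linearCombination (A ⊗[k] Aᵐᵒᵖ) id)
        ((1 : A) ⊗ₜ[k] b) _ }
  exact Module.Projective.of_split i r (LinearMap.ext hs)

/-- The regular right module. -/
theorem bi_env_projective : Module.Projective Aᵐᵒᵖ (Bi (envModuleCat k A A)) := by
  let e : Aᵐᵒᵖ ≃ₗ[Aᵐᵒᵖ] Bi (envModuleCat k A A) :=
    { (MulOpposite.opAddEquiv (α := A)).symm with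
      map_smul' := fun b t => by
        change unop (b * t) = (1 : A) • b • (unop t)
        simp }
  exact Module.Projective.of_equiv' e

theorem tX_step {K P : ModuleCat.{u} (A ⊗[k] Aᵐᵒᵖ)} (hW : Module.Projective Aᵐᵒᵖ (Bi W))
    [Module.Projective (A ⊗[k] Aᵐᵒᵖ) P] (f : ↥K →ₗ[A ⊗[k] Aᵐᵒᵖ] ↥P)
    (g : ↥P →ₗ[A ⊗[k] Aᵐᵒᵖ] ↥W) (hs : SES _ f g) :
    Module.Projective Aᵐᵒᵖ (Bi K) ∧ SES A (tXmap X f) (tXmap X g) := by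
  obtain ⟨hf, hg, hfg⟩ := hs
  have hgf : ∀ x, g (f x) = 0 := fun x => by
    have : f x ∈ LinearMap.ker g := hfg ▸ ⟨x, rfl⟩
    exact this
  obtain ⟨t, ht⟩ := Module.projective_lifting_property (biMap g) LinearMap.id hg
  have ht' : ∀ w, biMap g (t w) = w := fun w => LinearMap.congr_fun ht w
  have hρ : ∀ p : Bi P, ∃ x : Bi K, biMap f x = p - t (biMap g p) := fun p => by
    have : (show ↥P from p - t (biMap g p)) ∈ LinearMap.range f := by
      rw [hfg, LinearMap.mem_ker]
      change biMap g (p - t (biMap g p)) = 0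
      rw [map_sub, ht', sub_self]
    exact this
  choose ρ hρ using hρ
  have hf' : Function.Injective (biMap f) := hf
  let ρ' : Bi P →ₗ[Aᵐᵒᵖ] Bi K :=
    { toFun := ρ
      map_add' := fun p q => hf' (by rw [map_add, hρ, hρ, hρ, map_add, map_add]; abel)
      map_smul' := fun b p => hf' (by
        rw [RingHom.id_apply, map_smul, hρ, hρ, map_smul, map_smul, smul_sub]) }
  have h1 : ρ' ∘ₗ biMap f = LinearMap.id := LinearMap.ext fun x => hf' (by
    change biMap f (ρ (biMap f x)) = biMap f x
    rw [hρ]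
    have : biMap g (biMap f x) = 0 := hgf x
    rw [this, map_zero, sub_zero])
  have h3 : biMap f ∘ₗ ρ' + t ∘ₗ biMap g = LinearMap.id := LinearMap.ext fun p => by
    change biMap f (ρ p) + t (biMap g p) = p
    rw [hρ, sub_add_cancel]
  have hP : Module.Projective Aᵐᵒᵖ (Bi P) := bi_projective
  refine ⟨Module.Projective.of_split (biMap f) ρ' h1, ?_⟩
  obtain ⟨e1, e2, e3⟩ := Tens.map_exact_left (Y := ↥X) (biMap f) (biMap g) ρ' t h1 ht h3 hgf
  refine ⟨e1, e2, ?_⟩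
  ext z
  exact (e3 z).symm

section ToT

variable {T : Type u} [AddCommGroup T] [Module k T] [Module A T]
    [Module Aᵐᵒᵖ T] [IsScalarTower k A T] [IsScalarTower k Aᵐᵒᵖ T] [SMulCommClass A Aᵐᵒᵖ T]

variable (k A T) in
/-- The underlying bimodule of `envModuleCat k A T`. -/
def toT : Bi (envModuleCat k A T) ≃+ T := AddEquiv.refl T

theorem toT_smul (a : A) (w : Bi (envModuleCat k A T)) :
    toT k A T (a • w) = a • toT k A T w := by
  change a • (1 : Aᵐᵒᵖ) • (toT k A T w) = _
  rw [one_smul]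

theorem toT_op_smul (a : Aᵐᵒᵖ) (w : Bi (envModuleCat k A T)) :
    toT k A T (a • w) = a • toT k A T w := by
  change (1 : A) • a • (toT k A T w) = _
  rw [one_smul]

theorem toT_symm_smul (a : A) (w : T) :
    (toT k A T).symm (a • w) = a • (toT k A T).symm w := by
  apply (toT k A T).injective
  rw [toT_smul, AddEquiv.apply_symm_apply, AddEquiv.apply_symm_apply]

theorem toT_symm_op_smul (a : Aᵐᵒᵖ) (w : T) :
    (toT k A T).symm (a • w) = a • (toT k A T).symm w := by
  apply (toT k A T).injective
  rw [toT_op_smul, AddEquiv.apply_symm_apply, AddEquiv.apply_symm_apply]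

end ToT

/-- The identification `A ⊗_A X ≅ X`. -/
theorem tX_env : ∃ (i : ↥X →ₗ[A] ↥(tX X (envModuleCat k A A)))
    (r : ↥(tX X (envModuleCat k A A)) →ₗ[A] ↥X), (∀ x, r (i x) = x) ∧ ∀ x, i (r x) = x := by
  let r0 : Tens A (Bi (envModuleCat k A A)) ↥X →+ ↥X :=
    Tens.lift (fun a x => toT k A A a • x)
      (fun a a' x => by rw [map_add, add_smul])
      (fun a x x' => smul_add _ x x')
      (fun b a x => by rw [toT_op_smul, op_smul_eq_mul, mul_smul])
  have hr0 : ∀ a x, r0 (tmk A a x) = toT k A A a • x := fun a x => rfl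
  let r : Tens A (Bi (envModuleCat k A A)) ↥X →ₗ[A] ↥X :=
    Tens.toLin r0 (fun b a x => by rw [hr0, hr0, toT_smul, smul_eq_mul, mul_smul])
  let i : ↥X →ₗ[A] Tens A (Bi (envModuleCat k A A)) ↥X :=
    { toFun := fun x => tmk A ((toT k A A).symm 1) x
      map_add' := fun x y => tmk_add_right _ _ _
      map_smul' := fun a x => by
        rw [RingHom.id_apply, smul_tmk, ← tmk_smul, ← toT_symm_smul, ← toT_symm_op_smul]
        simp }
  have hi : ∀ x, i x = tmk A ((toT k A A).symm 1) x := fun x => rfl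
  refine ⟨i, r, fun x => ?_, fun z => ?_⟩
  · change r0 (tmk A ((toT k A A).symm 1) x) = x
    rw [hr0, AddEquiv.apply_symm_apply, one_smul]
  · have : i ∘ₗ r = LinearMap.id := Tens.lin_ext fun a x => by
      change i (r0 (tmk A a x)) = tmk A a x
      rw [hr0, hi, ← tmk_smul, ← toT_symm_op_smul]
      simp
    exact LinearMap.congr_fun this z

end Env

section TXProj

open MulOpposite

variable {k : Type u} [Field k] {A : Type u} [Ring A] [Algebra k A]
variable {P : ModuleCat.{u} (A ⊗[k] Aᵐᵒᵖ)}
variable {X : Type u} [AddCommGroup X] [Module A X] [Module k X] [IsScalarTower k A X]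

/-- The map `b ↦ b • x`. -/
def phiX (x : X) : Aᵐᵒᵖ →ₗ[k] X where
  toFun b := unop b • x
  map_add' b c := by rw [MulOpposite.unop_add, add_smul]
  map_smul' c b := by rw [RingHom.id_apply, MulOpposite.unop_smul, smul_assoc]

/-- The map `a ⊗ b ↦ a ⊗ b • x`. -/
noncomputable def thetaX (x : X) : A ⊗[k] Aᵐᵒᵖ →ₗ[A] A ⊗[k] X :=
  TensorProduct.AlgebraTensorModule.map LinearMap.id (phiX x)

theorem thetaX_tmul (x : X) (a : A) (b : Aᵐᵒᵖ) :
    thetaX (k := k) x (a ⊗ₜ[k] b) = a ⊗ₜ[k] (unop b • x) := rfl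

theorem thetaX_add (x y : X) (w : A ⊗[k] Aᵐᵒᵖ) :
    thetaX (x + y) w = thetaX x w + thetaX y w := by
  induction w using TensorProduct.induction_on with
  | zero => simp
  | tmul a b => rw [thetaX_tmul, smul_add, TensorProduct.tmul_add]; rfl
  | add v w hv hw => rw [map_add, map_add, map_add, hv, hw]; abel

theorem thetaX_smul (r : A) (x : X) (w : A ⊗[k] Aᵐᵒᵖ) :
    thetaX x (((1 : A) ⊗ₜ[k] op r) * w) = thetaX (r • x) w := by
  induction w using TensorProduct.induction_on with
  | zero => simp
  | tmul a b => 
    rw [Algebra.TensorProduct.tmul_mul_tmul, one_mul, thetaX_tmul, thetaX_tmul, unop_mul,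
      unop_op, mul_smul]
  | add v w hv hw => rw [mul_add, map_add, hv, hw, map_add]

theorem thetaX_left (a : A) (x : X) (w : A ⊗[k] Aᵐᵒᵖ) :
    thetaX x ((a ⊗ₜ[k] (1 : Aᵐᵒᵖ)) * w) = a • thetaX x w := by
  induction w using TensorProduct.induction_on with
  | zero => simp
  | tmul b c => 
    rw [Algebra.TensorProduct.tmul_mul_tmul, one_mul, thetaX_tmul, thetaX_tmul,
      TensorProduct.smul_tmul', smul_eq_mul]
  | add v w hv hw => rw [mul_add, map_add, hv, hw, map_add, smul_add]

/-- The map `a ⊗ x ↦ (a • p) ⊗ x`. -/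
noncomputable def rhoX (p : Bi P) : A ⊗[k] X →+ Tens A (Bi P) X :=
  TensorProduct.liftAddHom
    (AddMonoidHom.mk' (fun a => AddMonoidHom.mk' (fun x => tmk A (a • p) x)
      (fun x y => tmk_add_right _ _ _))
      (fun a b => AddMonoidHom.ext fun x => by
        change tmk A ((a + b) • p) x = tmk A (a • p) x + tmk A (b • p) x
        rw [add_smul, tmk_add_left]))
    (fun c a x => by
      change tmk A ((c • a) • p) x = tmk A (a • p) (c • x)
      have h1 : c • x = (algebraMap k A c) • x := by rw [algebraMap_smul]
      rw [h1, ← tmk_smul, bi_smul_smul', bi_smul]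
      congr 2
      rw [TensorProduct.smul_tmul]
      congr 1
      rw [Algebra.algebraMap_eq_smul_one]; rfl)

theorem rhoX_tmul (p : Bi P) (a : A) (x : X) : rhoX p (a ⊗ₜ[k] x) = tmk A (a • p) x := rfl

theorem rhoX_smul (p : Bi P) (a : A) (w : A ⊗[k] X) : rhoX p (a • w) = a • rhoX p w := by
  induction w using TensorProduct.induction_on with
  | zero => simp
  | tmul b x => 
    rw [TensorProduct.smul_tmul', rhoX_tmul, rhoX_tmul, smul_tmk, smul_eq_mul, mul_smul]
  | add v w hv hw => rw [smul_add, map_add, hv, hw, map_add, smul_add]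

theorem rhoX_thetaX (p : Bi P) (x : X) (w : A ⊗[k] Aᵐᵒᵖ) :
    rhoX p (thetaX x w) = tmk A (w • p) x := by
  induction w using TensorProduct.induction_on with
  | zero =>
    rw [map_zero, map_zero]
    have h : (0 : A ⊗[k] Aᵐᵒᵖ) • p = 0 := zero_smul (A ⊗[k] Aᵐᵒᵖ) p
    exact ((congrArg (fun q => tmk A q x) h).trans (tmk_zero_left x)).symm
  | tmul a b => 
    rw [thetaX_tmul, rhoX_tmul, ← tmk_smul, op_unop, bi_smul_smul']
  | add v w hv hw => rw [map_add, map_add, hv, hw, add_smul, tmk_add_left]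

theorem tens_projective [hP : Module.Projective (A ⊗[k] Aᵐᵒᵖ) P] :
    Module.Projective A (Tens A (Bi P) X) := by
  obtain ⟨s, hs⟩ := hP
  have h1 : Module.Projective A (Bi P →₀ A ⊗[k] X) := by
    classical
    exact Module.Projective.of_equiv' (finsuppLequivDFinsupp (ι := Bi P) (M := A ⊗[k] X) A).symm
  let s' : Bi P →+ (Bi P →₀ A ⊗[k] Aᵐᵒᵖ) := s.toAddMonoidHom
  have hs1 : ∀ (w : A ⊗[k] Aᵐᵒᵖ) (p : Bi P), s' (w • p) = w • s' p := fun w p => map_smul s w p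
  have hs2 : ∀ p, (s' p).sum (fun p w => w • p) = p := fun p => hs p
  let σ : Tens A (Bi P) X →+ (Bi P →₀ A ⊗[k] X) :=
    Tens.lift (fun p x => Finsupp.mapRange (thetaX x) (map_zero _) (s' p))
      (fun p q x => by
        rw [map_add, Finsupp.mapRange_add]
        intro a b; exact map_add _ _ _)
      (fun p x y => by
        ext q
        exact thetaX_add x y _)
      (fun r p x => by
        ext q
        rw [bi_op_smul, hs1]
        exact thetaX_smul r x _)
  have hσ : ∀ p x, σ (tmk A p x) = Finsupp.mapRange (thetaX x) (map_zero _) (s' p) :=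
    fun p x => rfl
  let σ' : Tens A (Bi P) X →ₗ[A] (Bi P →₀ A ⊗[k] X) :=
    { σ with
      map_smul' := fun a t => by
        change σ (a • t) = a • σ t
        induction t using Tens.induction with
        | h p x =>
          rw [smul_tmk, hσ, hσ, bi_smul, hs1]
          ext q
          exact thetaX_left a x _
        | h0 => simp
        | ha s t hs ht => rw [smul_add, map_add, map_add, hs, ht, smul_add] }
  let ρ : (Bi P →₀ A ⊗[k] X) →ₗ[A] Tens A (Bi P) X :=
    Finsupp.lsum ℕ fun p => { rhoX p with map_smul' := fun a w => rhoX_smul p a w }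
  have hρ : ∀ p w, ρ (Finsupp.single p w) = rhoX p w := fun p w => by
    simp [ρ]
  refine Module.Projective.of_split σ' ρ (Tens.lin_ext fun p x => ?_)
  change ρ (Finsupp.mapRange (thetaX x) (map_zero _) (s' p)) = tmk A p x
  conv_rhs => rw [← hs2 p]
  generalize s' p = c
  induction c using Finsupp.induction_linear with
  | zero => simp [tmk_zero_left]
  | add f g hf hg =>
    rw [Finsupp.mapRange_add, map_add, hf, hg, Finsupp.sum_add_index', tmk_add_left]
    · intro q; exact zero_smul (A ⊗[k] Aᵐᵒᵖ) q
    · intro q v w; exact add_smul v w q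
    · intro a b; exact map_add _ _ _
  | single q w =>
    rw [Finsupp.mapRange_single, hρ, rhoX_thetaX, Finsupp.sum_single_index]
    exact zero_smul (A ⊗[k] Aᵐᵒᵖ) q

theorem bi_finite [Module.Finite k A] [hP : Module.Finite (A ⊗[k] Aᵐᵒᵖ) P] :
    Module.Finite A (Bi P) := by
  have h0 : Module.Finite k Aᵐᵒᵖ :=
    Module.Finite.equiv (MulOpposite.opLinearEquiv k : A ≃ₗ[k] Aᵐᵒᵖ)
  have h1 : Module.Finite A (A ⊗[k] Aᵐᵒᵖ) := inferInstance
  have h2 : IsScalarTower A (A ⊗[k] Aᵐᵒᵖ) (Bi P) := ⟨fun a w p => by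
    rw [bi_smul, ← mul_smul]
    congr 1
    induction w using TensorProduct.induction_on with
    | zero => simp
    | tmul x y => rw [TensorProduct.smul_tmul']; simp
    | add v w hv hw => rw [smul_add, hv, hw, mul_add]⟩
  have h3 : Module.Finite (A ⊗[k] Aᵐᵒᵖ) (Bi P) := hP
  exact Module.Finite.trans (A ⊗[k] Aᵐᵒᵖ) (Bi P)

end TXProj

section Chain

attribute [local instance] ModuleCat.moduleOfAlgebraModule ModuleCat.isScalarTower_of_algebra_moduleCat

variable {k : Type u} [Field k] {A : Type u} [Ring A] [Algebra k A]
variable (X : ModuleCat.{u} A)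

theorem tX_projective (P : ModuleCat.{u} (A ⊗[k] Aᵐᵒᵖ))
    [Module.Projective (A ⊗[k] Aᵐᵒᵖ) P] : Module.Projective A (tX X P) :=
  tens_projective (P := P) (X := ↥X)

theorem tX_finite (P : ModuleCat.{u} (A ⊗[k] Aᵐᵒᵖ)) [Module.Finite k A] [Module.Finite A X]
    [Module.Finite (A ⊗[k] Aᵐᵒᵖ) P] : Module.Finite A (tX X P) := by
  have := bi_finite (P := P)
  exact Tens.finite (S := A) (R := A) (X := Bi P) (Y := ↥X)

theorem tXmap_comp {U V W : ModuleCat.{u} (A ⊗[k] Aᵐᵒᵖ)} (f : ↥V →ₗ[A ⊗[k] Aᵐᵒᵖ] ↥W)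
    (g : ↥U →ₗ[A ⊗[k] Aᵐᵒᵖ] ↥V) (z : tX X U) :
    tXmap X f (tXmap X g z) = tXmap X (f ∘ₗ g) z :=
  Tens.map_map (biMap f) LinearMap.id (biMap g) LinearMap.id z

theorem tXmap_id {U : ModuleCat.{u} (A ⊗[k] Aᵐᵒᵖ)} (z : tX X U) :
    tXmap X (LinearMap.id : ↥U →ₗ[A ⊗[k] Aᵐᵒᵖ] ↥U) z = z :=
  Tens.map_id_id (X := Bi U) z

theorem tXmap_add {U V : ModuleCat.{u} (A ⊗[k] Aᵐᵒᵖ)} (f g : ↥U →ₗ[A ⊗[k] Aᵐᵒᵖ] ↥V)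
    (z : tX X U) : tXmap X (f + g) z = tXmap X f z + tXmap X g z :=
  Tens.map_add_left (biMap f) (biMap g) LinearMap.id z

theorem tX_chain [Module.Finite k A] [Module.Finite A X] : ∀ (l : ℕ)
    (W K : ModuleCat.{u} (A ⊗[k] Aᵐᵒᵖ)), Module.Projective Aᵐᵒᵖ (Bi W) →
    IsNthSyzygy (A ⊗[k] Aᵐᵒᵖ) l W K → IsNthSyzygy A l (tX X W) (tX X K)
  | 0, W, K, _, h => by
    obtain ⟨e⟩ := h
    refine ⟨LinearEquiv.ofLinear (tXmap X e.toLinearMap) (tXmap X e.symm.toLinearMap) ?_ ?_⟩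
    · ext z
      rw [LinearMap.comp_apply, tXmap_comp]
      have : e.toLinearMap ∘ₗ e.symm.toLinearMap = LinearMap.id := by ext; simp
      rw [this]; exact tXmap_id X z
    · ext z
      rw [LinearMap.comp_apply, tXmap_comp]
      have : e.symm.toLinearMap ∘ₗ e.toLinearMap = LinearMap.id := by ext; simp
      rw [this]; exact tXmap_id X z
  | l + 1, W, K, hW, h => by
    obtain ⟨K₁, ⟨P, hP1, hP2, f, g, hs⟩, hK⟩ := h
    obtain ⟨h1, h2⟩ := tX_step X hW f g hs
    exact ⟨tX X K₁, ⟨tX X P, tX_finite X P, tX_projective X P, _, _, h2⟩,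
      tX_chain l K₁ K h1 hK⟩

theorem tX_retract {Z P K Q : ModuleCat.{u} (A ⊗[k] Aᵐᵒᵖ)}
    (e : (↥Z × ↥P) ≃ₗ[A ⊗[k] Aᵐᵒᵖ] (↥K × ↥Q)) :
    ∃ (i : ↥(tX X K) →ₗ[A] (↥(tX X Z) × ↥(tX X P)))
      (r : (↥(tX X Z) × ↥(tX X P)) →ₗ[A] ↥(tX X K)), ∀ x, r (i x) = x := by
  let j := e.symm.toLinearMap ∘ₗ LinearMap.inl _ ↥K ↥Q
  let q := LinearMap.fst _ ↥K ↥Q ∘ₗ e.toLinearMap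
  let j1 := LinearMap.fst _ ↥Z ↥P ∘ₗ j
  let j2 := LinearMap.snd _ ↥Z ↥P ∘ₗ j
  let q1 := q ∘ₗ LinearMap.inl _ ↥Z ↥P
  let q2 := q ∘ₗ LinearMap.inr _ ↥Z ↥P
  have h : q1 ∘ₗ j1 + q2 ∘ₗ j2 = LinearMap.id := by
    ext x
    change q (((j x).1, 0)) + q ((0, (j x).2)) = x
    rw [← map_add]
    simp [q, j]
  refine ⟨LinearMap.prod (tXmap X j1) (tXmap X j2),
    LinearMap.coprod (tXmap X q1) (tXmap X q2), fun x => ?_⟩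
  rw [LinearMap.prod_apply, Function.prod_apply, LinearMap.coprod_apply, tXmap_comp, tXmap_comp,
    ← tXmap_add, h]
  exact tXmap_id X x

end Chain
section RightMod

open MulOpposite

/-- The action on a tensor product coming from the right hand factor. -/
@[reducible] noncomputable def rightMod (R : Type u) [Ring R] (X Y : Type u) [AddCommGroup X]
    [AddCommGroup Y] [Module Rᵐᵒᵖ X] [Module R Y] (S : Type u) [Ring S] [Module S Y]
    [SMulCommClass R S Y] : Module S (Tens R X Y) where
  smul s t := Tens.map (LinearMap.id : X →ₗ[Rᵐᵒᵖ] X)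
    ({ toFun := fun y => s • y
       map_add' := smul_add s
       map_smul' := fun r y => (smul_comm r s y).symm } : Y →ₗ[R] Y) t
  smul_add s t t' := map_add (Tens.map _ _) t t'
  smul_zero s := map_zero (Tens.map _ _)
  one_smul t := by
    induction t using Tens.induction with
    | h x y => exact congrArg (tmk R x) (one_smul S y)
    | h0 => exact map_zero (Tens.map _ _)
    | ha s t hs ht => exact (map_add (Tens.map _ _) s t).trans (congrArg₂ (· + ·) hs ht)
  mul_smul a b t := by
    induction t using Tens.induction with
    | h x y => exact congrArg (tmk R x) (mul_smul a b y)
    | h0 => 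
      change Tens.map _ _ 0 = Tens.map _ _ (Tens.map _ _ 0)
      rw [map_zero, map_zero, map_zero]
    | ha s t hs ht => 
      refine (map_add (Tens.map _ _) s t).trans ((congrArg₂ (· + ·) hs ht).trans ?_)
      change Tens.map _ _ (Tens.map _ _ s) + Tens.map _ _ (Tens.map _ _ t) =
        Tens.map _ _ (Tens.map _ _ (s + t))
      rw [map_add, map_add]
  add_smul a b t := by
    induction t using Tens.induction with
    | h x y => 
      exact (congrArg (tmk R x) (add_smul a b y)).trans (tmk_add_right _ _ _)
    | h0 => 
      change Tens.map _ _ 0 = Tens.map _ _ 0 + Tens.map _ _ 0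
      rw [map_zero, map_zero, map_zero, add_zero]
    | ha s t hs ht => 
      refine (map_add (Tens.map _ _) s t).trans ((congrArg₂ (· + ·) hs ht).trans ?_)
      change Tens.map _ _ s + Tens.map _ _ s + (Tens.map _ _ t + Tens.map _ _ t) =
        Tens.map _ _ (s + t) + Tens.map _ _ (s + t)
      rw [map_add, map_add]
      abel
  zero_smul t := by
    induction t using Tens.induction with
    | h x y => exact (congrArg (tmk R x) (zero_smul S y)).trans (tmk_zero_right _)
    | h0 => exact map_zero (Tens.map _ _)
    | ha s t hs ht => 
      exact (map_add (Tens.map _ _) s t).trans ((congrArg₂ (· + ·) hs ht).trans (add_zero 0))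

end RightMod

section TTdef

open MulOpposite

/-- The bimodule `M ⊗_B N`. -/
def TT (B : Type u) [Ring B] (M N : Type u) [AddCommGroup M] [AddCommGroup N] [Module Bᵐᵒᵖ M]
    [Module B N] : Type u := Tens B M N

variable {B : Type u} [Ring B] {M N : Type u} [AddCommGroup M] [AddCommGroup N] [Module Bᵐᵒᵖ M]
    [Module B N]

noncomputable instance : AddCommGroup (TT B M N) := inferInstanceAs (AddCommGroup (Tens B M N))

noncomputable instance instTTl {S : Type u} [Ring S] [Module S M] [SMulCommClass S Bᵐᵒᵖ M] :
    Module S (TT B M N) := inferInstanceAs (Module S (Tens B M N))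

noncomputable instance instTTr {A : Type u} [Ring A] [Module Aᵐᵒᵖ N] [SMulCommClass B Aᵐᵒᵖ N] :
    Module Aᵐᵒᵖ (TT B M N) := rightMod B M N Aᵐᵒᵖ

variable (B) in
/-- Pure tensors. -/
def tt (m : M) (n : N) : TT B M N := tmk B m n

theorem tt_smul {S : Type u} [Ring S] [Module S M] [SMulCommClass S Bᵐᵒᵖ M] (s : S) (m : M)
    (n : N) : s • tt B m n = tt B (s • m) n := rfl

theorem tt_op_smul {A : Type u} [Ring A] [Module Aᵐᵒᵖ N] [SMulCommClass B Aᵐᵒᵖ N] (a : Aᵐᵒᵖ)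
    (m : M) (n : N) : a • tt B m n = tt B m (a • n) := rfl

theorem tt_add_left (m m' : M) (n : N) : tt B (m + m') n = tt B m n + tt B m' n :=
  tmk_add_left m m' n

theorem tt_add_right (m : M) (n n' : N) : tt B m (n + n') = tt B m n + tt B m n' :=
  tmk_add_right m n n'

theorem tt_bal (b : B) (m : M) (n : N) : tt B (op b • m) n = tt B m (b • n) :=
  tmk_smul b m n

theorem TT.induction {p : TT B M N → Prop} (h : ∀ x y, p (tt B x y)) (h0 : p 0)
    (ha : ∀ s t, p s → p t → p (s + t)) (t : TT B M N) : p t :=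
  Tens.induction h h0 ha t

theorem TT.isTensor : IsTensorProductOver B (tt B : M → N → TT B M N) := by
  refine ⟨⟨tt_add_left, tt_add_right, tt_bal⟩, fun T' _ β' h => ?_⟩
  refine ⟨Tens.lift β' h.1 h.2.1 h.2.2, fun x y => rfl, fun φ hφ => ?_⟩
  exact Tens.hom_ext (f := φ) fun x y => hφ x y

variable {k A : Type u} [Field k] [Ring A] [Algebra k A] [Algebra k B]
variable [Module k M] [Module A M] [Module k N] [Module Aᵐᵒᵖ N]
variable [IsScalarTower k A M] [IsScalarTower k Bᵐᵒᵖ M] [SMulCommClass A Bᵐᵒᵖ M]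
variable [IsScalarTower k B N] [IsScalarTower k Aᵐᵒᵖ N] [SMulCommClass B Aᵐᵒᵖ N]

instance instTT1 : IsScalarTower k A (TT B M N) := ⟨fun c a t => by
  induction t using TT.induction with
  | h x y => simp only [tt_smul, smul_assoc]
  | h0 => simp only [smul_zero]
  | ha s t hs ht => simp only [smul_add, hs, ht]⟩

theorem tt_k_smul (c : k) (m : M) (n : N) : tt B (c • m) n = tt B m (c • n) := by
  have h1 : c • m = op (algebraMap k B c) • m := by
    rw [Algebra.algebraMap_eq_smul_one, op_smul, op_one, smul_assoc, one_smul]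
  have h2 : c • n = (algebraMap k B c) • n := by rw [algebraMap_smul]
  rw [h1, h2, tt_bal]

instance instTT2 : IsScalarTower k Aᵐᵒᵖ (TT B M N) := ⟨fun c a t => by
  induction t using TT.induction with
  | h x y => rw [tt_op_smul, tt_op_smul, tt_smul, tt_k_smul, smul_assoc]
  | h0 => simp only [smul_zero]
  | ha s t hs ht => simp only [smul_add, hs, ht]⟩

instance instTT3 : SMulCommClass A Aᵐᵒᵖ (TT B M N) := ⟨fun c a t => by
  induction t using TT.induction with
  | h x y => rw [tt_op_smul, tt_smul, tt_smul, tt_op_smul]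
  | h0 => simp only [smul_zero]
  | ha s t hs ht => simp only [smul_add, hs, ht]⟩

variable (k A B M N) in
/-- Associativity of the tensor product, as a retraction. -/
theorem tX_assoc (X : ModuleCat.{u} A) :
    ∃ (i : ↥(tX X (envModuleCat k A (TT B M N))) →ₗ[A] Tens B M (Tens A N X))
      (r : Tens B M (Tens A N X) →ₗ[A] ↥(tX X (envModuleCat k A (TT B M N)))),
      ∀ x, r (i x) = x := by
  let E := toT k A (TT B M N)
  let i0 : ↥X → TT B M N →+ Tens B M (Tens A N X) := fun x =>
    (Tens.lift (fun m n => tmk B m (tmk A n x))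
      (fun m m' n => tmk_add_left _ _ _)
      (fun m n n' => by rw [tmk_add_left, tmk_add_right])
      (fun b m n => by rw [tmk_smul, smul_tmk]) : Tens B M N →+ Tens B M (Tens A N X))
  have hi0 : ∀ x m n, i0 x (tt B m n) = tmk B m (tmk A n x) := fun x m n => rfl
  have hi1 : ∀ x y t, i0 (x + y) t = i0 x t + i0 y t := fun x y t => by
    induction t using TT.induction with
    | h m n => rw [hi0, tmk_add_right, tmk_add_right]; rfl
    | h0 => simp
    | ha s t hs ht => simp only [map_add, hs, ht]; abel
  have hi2 : ∀ (a : A) x t, i0 x (op a • t) = i0 (a • x) t := fun a x t => by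
    induction t using TT.induction with
    | h m n => rw [tt_op_smul, hi0, hi0, tmk_smul]
    | h0 => simp
    | ha s t hs ht => simp only [smul_add, map_add, hs, ht]
  have hi3 : ∀ (a : A) x t, i0 x (a • t) = a • i0 x t := fun a x t => by
    induction t using TT.induction with
    | h m n => rw [tt_smul, hi0, hi0, smul_tmk]
    | h0 => simp
    | ha s t hs ht => simp only [smul_add, map_add, hs, ht]
  let i1 : Tens A (Bi (envModuleCat k A (TT B M N))) X →+ Tens B M (Tens A N X) :=
    Tens.lift (fun w x => i0 x (E w))
      (fun w w' x => by rw [map_add, map_add])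
      (fun w x y => hi1 x y _)
      (fun a w x => by rw [toT_op_smul, hi2])
  have hi4 : ∀ w x, i1 (tmk A w x) = i0 x (E w) := fun w x => rfl
  let i : Tens A (Bi (envModuleCat k A (TT B M N))) X →ₗ[A] Tens B M (Tens A N X) :=
    Tens.toLin i1 (fun a w x => by rw [hi4, hi4, toT_smul, hi3])
  let r0 : M → Tens A N X →+ Tens A (Bi (envModuleCat k A (TT B M N))) X := fun m =>
    Tens.lift (fun n x => tmk A (E.symm (tt B m n)) x)
      (fun n n' x => by rw [tt_add_right, map_add, tmk_add_left])
      (fun n x x' => tmk_add_right _ _ _)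
      (fun a n x => by rw [← tt_op_smul, toT_symm_op_smul, tmk_smul])
  have hr0 : ∀ m n x, r0 m (tmk A n x) = tmk A (E.symm (tt B m n)) x := fun m n x => rfl
  have hr1 : ∀ m m' t, r0 (m + m') t = r0 m t + r0 m' t := fun m m' t => by
    induction t using Tens.induction with
    | h n x => rw [hr0, tt_add_left, map_add, tmk_add_left]; rfl
    | h0 => simp
    | ha s t hs ht => simp only [map_add, hs, ht]; abel
  have hr2 : ∀ (b : B) m t, r0 (op b • m) t = r0 m (b • t) := fun b m t => by
    induction t using Tens.induction with
    | h n x => rw [hr0, tt_bal, smul_tmk, hr0]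
    | h0 => simp
    | ha s t hs ht => simp only [smul_add, map_add, hs, ht]
  have hr3 : ∀ (a : A) m t, r0 (a • m) t = a • r0 m t := fun a m t => by
    induction t using Tens.induction with
    | h n x => rw [hr0, ← tt_smul, toT_symm_smul, hr0, smul_tmk]
    | h0 => simp
    | ha s t hs ht => simp only [smul_add, map_add, hs, ht]
  let r1 : Tens B M (Tens A N X) →+ Tens A (Bi (envModuleCat k A (TT B M N))) X :=
    Tens.lift (fun m t => r0 m t) hr1 (fun m => map_add (r0 m)) hr2
  have hr4 : ∀ m t, r1 (tmk B m t) = r0 m t := fun m t => rfl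
  let r : Tens B M (Tens A N X) →ₗ[A] Tens A (Bi (envModuleCat k A (TT B M N))) X :=
    Tens.toLin r1 (fun a m t => by rw [hr4, hr4, hr3])
  refine ⟨i, r, fun z => ?_⟩
  have hm : r ∘ₗ i = LinearMap.id := Tens.lin_ext fun w x => by
    change r1 (i1 (tmk A w x)) = tmk A w x
    rw [hi4]
    have h5 : ∀ t : TT B M N, r1 (i0 x t) = tmk A (E.symm t) x := fun t => by
      induction t using TT.induction with
      | h m n => rw [hi0, hr4, hr0]
      | h0 => rw [map_zero, map_zero, map_zero, tmk_zero_left]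
      | ha s t hs ht => rw [map_add, map_add, hs, ht, map_add, tmk_add_left]
    rw [h5, AddEquiv.symm_apply_apply]
  exact LinearMap.congr_fun hm z

end TTdef

section Main

open MulOpposite

variable (k : Type u) [Field k]
variable (A B : Type u) [Ring A] [Ring B] [Algebra k A] [Algebra k B]
variable (M : Type u) [AddCommGroup M] [Module k M] [Module A M] [Module Bᵐᵒᵖ M]
variable [IsScalarTower k A M] [IsScalarTower k Bᵐᵒᵖ M] [SMulCommClass A Bᵐᵒᵖ M]
variable (N : Type u) [AddCommGroup N] [Module k N] [Module B N] [Module Aᵐᵒᵖ N]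
variable [IsScalarTower k B N] [IsScalarTower k Aᵐᵒᵖ N] [SMulCommClass B Aᵐᵒᵖ N]

theorem half_step [Module.Finite k A] (l : ℕ) [Module.Finite A M] [Module.Projective Bᵐᵒᵖ M]
    [Module.Finite B N]
    (h : StablyIsoNthSyzygy (A ⊗[k] Aᵐᵒᵖ) l (envModuleCat k A (TT B M N)) (envModuleCat k A A))
    (n : ℕ) (V : ModuleCat.{u} B) (hV : Module.Finite B V)
    (hV' : ∀ Y ∈ fgModules B, Y ∈ bracket B V (n + 1)) :
    ∃ V' : ModuleCat.{u} A, Module.Finite A V' ∧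
      ∀ X ∈ fgModules A, X ∈ bracket A V' (n + l + 1) := by
  obtain ⟨K, hK, P, Q, hP1, hP2, hQ1, hQ2, ⟨e⟩⟩ := h
  let U : ModuleCat.{u} A := ModuleCat.of A (Tens B M V)
  have hU : Module.Finite A U := Tens.finite (S := A) (R := B) (X := M) (Y := ↥V)
  have hU' : Module.Finite A (ModuleCat.of A (U × A)) :=
    inferInstanceAs (Module.Finite A (↥U × A))
  obtain ⟨V', hV1, hV2⟩ := bracket_syzygy k (n + 1) l (ModuleCat.of A (U × A)) hU'
  refine ⟨V', hV1, fun X hX => ?_⟩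
  have hXf : Module.Finite A X := hX
  have h1 : ModuleCat.of B (Tens A N X) ∈ fgModules B :=
    Tens.finite (S := B) (R := A) (X := N) (Y := ↥X)
  have h2 : ModuleCat.of A (Tens B M (Tens A N X)) ∈ bracket A U (n + 1) :=
    (tensFun A B M).bracket (hV' _ h1)
  obtain ⟨i, r, hir⟩ := tX_assoc B M N k A X
  have h3 : tX X (envModuleCat k A (TT B M N)) ∈ bracket A U (n + 1) :=
    bracket_retract U h2 i r hir
  obtain ⟨i', r', hir'⟩ := tX_retract X e
  have hf : Module.Finite A (tX X P) := tX_finite X P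
  have hp : Module.Projective A (tX X P) := tX_projective X P
  have h4 : tX X K ∈ bracket A (ModuleCat.of A (U × A)) (n + 1) :=
    bracket_add_proj h3 i' r' hir'
  have h5 := tX_chain X l _ _ bi_env_projective hK
  have h6 := hV2 _ _ h5 h4
  obtain ⟨i'', r'', hir'', -⟩ := tX_env (k := k) X
  have h7 := bracket_retract V' h6 i'' r'' hir''
  rwa [show n + l + 1 = n + 1 + l by omega]

theorem half [Module.Finite k A] (l : ℕ) [Module.Finite A M] [Module.Projective Bᵐᵒᵖ M]
    [Module.Finite B N]
    (h : StablyIsoNthSyzygy (A ⊗[k] Aᵐᵒᵖ) l (envModuleCat k A (TT B M N)) (envModuleCat k A A)) :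
    extDim A ≤ extDim B + l := by
  unfold extDim extDimCat
  set S := {m : ℕ∞ | ∃ n : ℕ, m = n ∧ ∃ M : ModuleCat.{u} B, Module.Finite B M ∧
    ∀ X ∈ fgModules B, X ∈ bracket B M (n + 1)} with hS
  rcases S.eq_empty_or_nonempty with h0 | h0
  · rw [h0, sInf_empty, top_add]; exact le_top
  · obtain ⟨n, hn, V, hV, hV'⟩ := csInf_mem h0
    rw [hn]
    refine sInf_le ⟨n + l, by push_cast; rfl, half_step k A B M N l h n V hV hV'⟩

end Main

end ExtDimAux

namespace ExtDim

section Statement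


open scoped TensorProduct

variable (k : Type u) [Field k]
variable (A B : Type u) [Ring A] [Ring B] [Algebra k A] [Algebra k B]
variable [Module.Finite k A] [Module.Finite k B]
variable (M : Type u) [AddCommGroup M] [Module k M] [Module A M] [Module Bᵐᵒᵖ M]
variable [IsScalarTower k A M] [IsScalarTower k Bᵐᵒᵖ M] [SMulCommClass A Bᵐᵒᵖ M]
variable (N : Type u) [AddCommGroup N] [Module k N] [Module B N] [Module Aᵐᵒᵖ N]
variable [IsScalarTower k B N] [IsScalarTower k Aᵐᵒᵖ N] [SMulCommClass B Aᵐᵒᵖ N]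

/-- **Theorem 2.(1)**: if the finite dimensional algebras `A` and `B` are singularly
equivalent of Morita type with level `l`, then `|ext.dim(A) − ext.dim(B)| ≤ l`. -/
theorem extDim_of_singularEquivalence_level (l : ℕ)
    (h : SingularEquivalenceOfMoritaTypeWithLevel k A B M N l) :
    extDim A ≤ extDim B + l ∧ extDim B ≤ extDim A + l := by
  obtain ⟨h1, h2, h3, h4, h5, h6, h7, h8, h9, h10⟩ := h
  exact ⟨ExtDimAux.half k A B M N l
      (h9 (ExtDimAux.TT B M N) (ExtDimAux.tt B) ExtDimAux.TT.isTensor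
        (fun _ _ _ => rfl) (fun _ _ _ => rfl) (fun _ _ _ => rfl)),
    ExtDimAux.half k B A N M l
      (h10 (ExtDimAux.TT A N M) (ExtDimAux.tt A) ExtDimAux.TT.isTensor
        (fun _ _ _ => rfl) (fun _ _ _ => rfl) (fun _ _ _ => rfl))⟩

end Statement

end ExtDim
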